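/- arXiv:1502.06841 — 3 statements merged into one kernel-verified Lean document; each statement's English description precedes it below -/
import Mathlib

section
/- (Liapunov's linearized stability theorem.) Let f : ℝ^N → ℝ^N be continuously differentiable and let a ∈ ℝ^N satisfy f(a) = 0. Assume that every complex root of the characteristic polynomial of the Jacobian matrix Df(a) has negative real part, and let η be the minimum of the negated real parts of these roots. Then for each δ with 0 < δ < η there exist ρ > 0 and M ≥ 1 such that: for every C¹ function u : [0,τ) → ℝ^N satisfying u′(t) = f(u(t)) for all t ∈ [0,τ) and ‖u(0) − a‖ ≤ ρ, one has ‖u(t) − a‖ ≤ M·‖u(0) − a‖·e^{−δt} for all t ∈ [0,τ). -/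
open Set Polynomial

/-!
If the spectrum of `A = Df(a)` lies in `{re z < -δ}`, then for some small `η > 0` and some `γ > δ`
the spectrum of the Euler step `1 + η A` lies in the disc `{‖z‖ < 1 - η γ}`. By Gelfand's formula
`‖(1 + η A) ^ n‖ ≤ C (1 - η γ) ^ n`, so `q x = sup_n ‖(1 + η A) ^ n x‖ / (1 - η γ) ^ n` is an
equivalent norm with `q (x + η A x) ≤ (1 - η γ) q x`.

Since the nonlinear remainder is `o(‖y - a‖)`, this inequality survives for the Euler step of `f`
near `a` with a slightly smaller rate. By convexity of `q`, the difference quotient of `q` over an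
Euler step of any length bounds the upper right Dini derivative of `q (u - a)` along a solution `u`,
and comparison with an exponential barrier concludes.
-/

open Filter Topology Asymptotics

section Spectrum

theorem norm_one_add_mul_lt {z : ℂ} {η γ : ℝ} (hη : 0 < η) (hηγ : η * γ < 1)
    (hz : 2 * z.re + η * ‖z‖ ^ 2 < -2 * γ) : ‖1 + η * z‖ < 1 - η * γ := by
  have hnormSq : ‖1 + η * z‖ ^ 2 = 1 + η * (2 * z.re + η * ‖z‖ ^ 2) := by
    simp only [← Complex.normSq_eq_norm_sq, Complex.normSq_apply, Complex.add_re, Complex.add_im,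
      Complex.re_ofReal_mul, Complex.im_ofReal_mul, Complex.one_re, Complex.one_im]
    ring
  refine lt_of_pow_lt_pow_left₀ 2 (by linarith) ?_
  calc ‖1 + η * z‖ ^ 2 < 1 + η * (-2 * γ) := by rw [hnormSq]; gcongr
    _ ≤ (1 - η * γ) ^ 2 := by nlinarith [sq_nonneg (η * γ)]

theorem exists_forall_norm_one_add_mul_lt_of_isCompact {S : Set ℂ} (hS : IsCompact S) {δ : ℝ}
    (h : ∀ z ∈ S, z.re < -δ) :
    ∃ η > 0, ∃ γ > δ, η * γ < 1 ∧ ∀ z ∈ S, ‖1 + (η : ℂ) * z‖ < 1 - η * γ := by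
  obtain ⟨γ', hδγ', hre⟩ : ∃ γ', δ < γ' ∧ ∀ z ∈ S, γ' ≤ -z.re :=
    hS.exists_forall_le' Complex.continuous_re.neg.continuousOn fun z hz ↦ lt_neg_of_lt_neg (h z hz)
  obtain ⟨γ, hδγ, hγγ'⟩ := exists_between hδγ'
  obtain ⟨K, hK⟩ := hS.isBounded.exists_norm_le
  have hsmall (c ε : ℝ) (hε : 0 < ε) : ∀ᶠ η : ℝ in 𝓝[>] 0, η * c < ε :=
    nhdsWithin_le_nhds <|
      ((continuous_mul_const c).tendsto' 0 0 (zero_mul c)).eventually_lt_const hε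
  obtain ⟨η, ⟨hηγ, hηK⟩, hη⟩ := ((hsmall γ 1 one_pos).and
    (hsmall (K ^ 2) (2 * (γ' - γ)) (by linarith))).and eventually_mem_nhdsWithin |>.exists
  rw [mem_Ioi] at hη
  refine ⟨η, hη, γ, hδγ, hηγ, fun z hz ↦ norm_one_add_mul_lt hη hηγ ?_⟩
  have : η * ‖z‖ ^ 2 ≤ η * K ^ 2 := by gcongr; exact hK z hz
  linarith [hre z hz]

theorem spectrum_one_add_smul {𝕜 R : Type*} [Field 𝕜] [Ring R] [Algebra 𝕜 R] {c : 𝕜}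
    (hc : c ≠ 0) (a : R) : spectrum 𝕜 (1 + c • a) = (fun z ↦ 1 + c * z) '' spectrum 𝕜 a := by
  have hsmul : spectrum 𝕜 (c • a) = (c * ·) '' spectrum 𝕜 a :=
    spectrum.unit_smul_eq_smul a (Units.mk0 c hc)
  rw [← map_one (algebraMap 𝕜 R), ← spectrum.singleton_add_eq, hsmul, singleton_add, image_image]

variable {A : Type*} [NormedRing A] [NormedAlgebra ℂ A] [CompleteSpace A]

theorem pow_isBigO_pow_of_forall_spectrum_norm_lt (a : A) {r : ℝ} (hr : 0 < r)
    (h : ∀ z ∈ spectrum ℂ a, ‖z‖ < r) : (fun n : ℕ ↦ a ^ n) =O[atTop] fun n ↦ r ^ n := by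
  nontriviality A
  lift r to NNReal using hr.le
  have hradius : spectralRadius ℂ a < r :=
    spectrum.spectralRadius_lt_of_forall_lt a fun z hz ↦ by exact_mod_cast h z hz
  refine IsBigO.of_bound' ?_
  filter_upwards [(spectrum.gelfand_formula a).eventually_lt_const hradius,
    eventually_gt_atTop 0] with n hroot hn
  rw [one_div, ENNReal.rpow_inv_lt_iff (by exact_mod_cast hn), ENNReal.rpow_natCast] at hroot
  rw [norm_pow (r : ℝ), Real.norm_of_nonneg hr.le]
  exact_mod_cast hroot.le

theorem exists_one_add_smul_pow_isBigO_of_spectrum (a : A) {δ : ℝ}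
    (h : ∀ z ∈ spectrum ℂ a, z.re < -δ) :
    ∃ η > 0, ∃ γ > δ, η * γ < 1 ∧
      (fun n : ℕ ↦ (1 + (η : ℂ) • a) ^ n) =O[atTop] fun n ↦ (1 - η * γ) ^ n := by
  obtain ⟨η, hη, γ, hγ, hηγ, hlt⟩ :=
    exists_forall_norm_one_add_mul_lt_of_isCompact (spectrum.isCompact a) h
  refine ⟨η, hη, γ, hγ, hηγ, pow_isBigO_pow_of_forall_spectrum_norm_lt _ (by linarith) ?_⟩
  rwa [spectrum_one_add_smul (Complex.ofReal_ne_zero.2 hη.ne'), forall_mem_image]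

end Spectrum

section FiniteDimensional

variable {E : Type*} [NormedAddCommGroup E] [NormedSpace ℝ E] [FiniteDimensional ℝ E]

theorem isBigO_apply_of_injective {𝕜 F G α : Type*} [NontriviallyNormedField 𝕜]
    [CompleteSpace 𝕜] [NormedAddCommGroup F] [NormedSpace 𝕜 F] [FiniteDimensional 𝕜 F]
    [NormedAddCommGroup G] [NormedSpace 𝕜 G] {φ : F →ₗ[𝕜] G} (hφ : Function.Injective φ)
    (f : α → F) (l : Filter α) : f =O[l] fun x ↦ φ (f x) := by
  obtain ⟨K, -, hK⟩ := φ.injective_iff_antilipschitz.1 hφ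
  exact IsBigO.of_bound K <| .of_forall fun x ↦ ZeroHomClass.bound_of_antilipschitz φ hK (f x)

open scoped Matrix.Norms.Operator in
theorem exists_one_add_smul_pow_isBigO_of_charpoly_roots (A : E →L[ℝ] E) {δ : ℝ}
    (h : ∀ μ : ℂ, ((A : E →ₗ[ℝ] E).charpoly.map (algebraMap ℝ ℂ)).IsRoot μ → δ < -μ.re) :
    ∃ η > 0, ∃ γ > δ, η * γ < 1 ∧
      (fun n : ℕ ↦ (1 + η • A) ^ n) =O[atTop] fun n ↦ (1 - η * γ) ^ n := by
  let b := Module.finBasis ℝ E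
  let φ : (E →L[ℝ] E) →ₐ[ℝ] Matrix _ _ ℂ := Complex.ofRealAm.mapMatrix.comp
    ((LinearMap.toMatrixAlgEquiv b).toAlgHom.comp
      (Module.End.toContinuousLinearMap E).symm.toAlgHom)
  have hφ : Function.Injective φ :=
    (Matrix.map_injective Complex.ofReal_injective).comp
      ((LinearMap.toMatrixAlgEquiv b).injective.comp ContinuousLinearMap.coe_injective)
  have hcharpoly : (φ A).charpoly = (A : E →ₗ[ℝ] E).charpoly.map (algebraMap ℝ ℂ) := by
    rw [← LinearMap.charpoly_toMatrix _ b, ← Matrix.charpoly_map]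
    rfl
  have hspec (z : ℂ) (hz : z ∈ spectrum ℂ (φ A)) : z.re < -δ := by
    rw [Matrix.mem_spectrum_iff_isRoot_charpoly, hcharpoly] at hz
    exact lt_neg_of_lt_neg (h z hz)
  obtain ⟨η, hη, γ, hγ, hηγ, hpow⟩ := exists_one_add_smul_pow_isBigO_of_spectrum (φ A) hspec
  have hφpow (n : ℕ) : φ ((1 + η • A) ^ n) = (1 + (η : ℂ) • φ A) ^ n := by
    rw [map_pow, map_add, map_one, map_smul, Complex.coe_smul]
  refine ⟨η, hη, γ, hγ, hηγ, (isBigO_apply_of_injective (φ := φ.toLinearMap) hφ _ _).trans ?_⟩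
  simpa only [AlgHom.toLinearMap_apply, hφpow] using hpow

end FiniteDimensional

section AdaptedSeminorm

theorem exists_seminorm_apply_le_of_norm_pow_le {𝕜 E : Type*} [NontriviallyNormedField 𝕜]
    [SeminormedAddCommGroup E] [NormedSpace 𝕜 E] (T : E →L[𝕜] E) {C : ℝ}
    (hT : ∀ n : ℕ, ‖T ^ n‖ ≤ C) :
    ∃ q : Seminorm 𝕜 E, Continuous q ∧ (∀ x, ‖x‖ ≤ q x) ∧ ∀ x, q (T x) ≤ q x := by
  let p (n : ℕ) : Seminorm 𝕜 E := (normSeminorm 𝕜 E).comp (T ^ n : E →L[𝕜] E).toLinearMap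
  have hC : 0 ≤ C := (norm_nonneg _).trans (hT 0)
  lift C to NNReal using hC
  have hp (n : ℕ) : p n ≤ C • normSeminorm 𝕜 E := fun x ↦ (T ^ n).le_of_opNorm_le (hT n) x
  have hbdd : BddAbove (range p) := ⟨_, forall_mem_range.2 hp⟩
  have hcont : Continuous (C • normSeminorm 𝕜 E : Seminorm 𝕜 E) := continuous_norm.const_smul C
  refine ⟨⨆ n, p n, Seminorm.continuous_of_le hcont (ciSup_le hp), fun x ↦ ?_, fun x ↦ ?_⟩
  · exact le_ciSup hbdd 0 x
  · rw [Seminorm.iSup_apply hbdd]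
    refine ciSup_le fun n ↦ ?_
    simpa [p, pow_succ] using le_ciSup hbdd (n + 1) x

theorem exists_seminorm_apply_le_mul_of_pow_isBigO {E : Type*} [SeminormedAddCommGroup E]
    [NormedSpace ℝ E] (T : E →L[ℝ] E) {r : ℝ} (hr : 0 < r)
    (hT : (fun n : ℕ ↦ T ^ n) =O[atTop] fun n ↦ r ^ n) :
    ∃ q : Seminorm ℝ E, Continuous q ∧ (∀ x, ‖x‖ ≤ q x) ∧ ∀ x, q (T x) ≤ r * q x := by
  obtain ⟨C, -, hC⟩ := bound_of_isBigO_nat_atTop hT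
  have hpow (n : ℕ) : ‖(r⁻¹ • T) ^ n‖ ≤ C := by
    have hrn : r ^ n ≠ 0 := (pow_pos hr n).ne'
    rw [_root_.smul_pow, inv_pow, norm_smul, norm_inv, inv_mul_le_iff₀' (norm_pos_iff.2 hrn)]
    exact hC hrn
  obtain ⟨q, hcont, hle, hq⟩ := exists_seminorm_apply_le_of_norm_pow_le (r⁻¹ • T) hpow
  refine ⟨q, hcont, hle, fun x ↦ ?_⟩
  simpa [map_smul_eq_mul, abs_of_pos hr, inv_mul_le_iff₀ hr] using hq x

end AdaptedSeminorm

section DiniDerivative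

theorem seminorm_add_smul_le_secant {F : Type*} [AddCommGroup F] [Module ℝ F] (q : Seminorm ℝ F)
    (x w : F) {η s : ℝ} (hη : 0 < η) (hs : s ∈ Icc 0 η) :
    q (x + s • w) ≤ q x + s * ((q (x + η • w) - q x) / η) := by
  have hs' : 0 ≤ 1 - s / η := sub_nonneg.2 ((div_le_one hη).2 hs.2)
  calc q (x + s • w) = q ((1 - s / η) • x + (s / η) • (x + η • w)) := by
        congr 1; match_scalars <;> field_simp; ring
    _ ≤ (1 - s / η) * q x + (s / η) * q (x + η • w) :=
        q.convexOn.2 (mem_univ _) (mem_univ _) hs' (div_nonneg hs.1 hη.le) (sub_add_cancel _ _)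
    _ = q x + s * ((q (x + η • w) - q x) / η) := by field_simp; ring

theorem eventually_slope_seminorm_lt {E : Type*} [NormedAddCommGroup E] [NormedSpace ℝ E]
    {q : Seminorm ℝ E} (hcont : Continuous q) {v : ℝ → E} {v' : E} {η t r : ℝ}
    (hv : HasDerivWithinAt v v' (Ici t) t) (hη : 0 < η)
    (hr : (q (v t + η • v') - q (v t)) / η < r) :
    ∀ᶠ s in 𝓝[>] t, slope (fun s ↦ q (v s)) t s < r := by
  set m := (q (v t + η • v') - q (v t)) / η
  have herror : Tendsto (fun s ↦ m + q (slope v t s - v')) (𝓝[>] t) (𝓝 m) := by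
    have := hasDerivWithinAt_iff_tendsto_slope.1 hv
    rw [Ici_sdiff_left] at this
    simpa using ((hcont.tendsto _).comp (this.sub_const v')).const_add m
  filter_upwards [herror.eventually_lt_const hr, self_mem_nhdsWithin,
    nhdsWithin_le_nhds (eventually_le_nhds (lt_add_of_pos_right t hη))] with s hs hts hsη
  refine lt_of_le_of_lt ?_ hs
  have hst : 0 < s - t := sub_pos.2 hts
  rw [slope_def_field, div_le_iff₀ hst, sub_le_iff_le_add']
  calc q (v s) = q (v t + (s - t) • v' + (s - t) • (slope v t s - v')) := by
        rw [smul_sub, sub_smul_slope, vsub_eq_sub]; abel_nf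
    _ ≤ q (v t + (s - t) • v') + (s - t) * q (slope v t s - v') := by
        grw [map_add_le_add, map_smul_eq_mul, Real.norm_of_nonneg hst.le]
    _ ≤ q (v t) + (s - t) * m + (s - t) * q (slope v t s - v') := by
        gcongr
        exact seminorm_add_smul_le_secant q _ _ hη ⟨hst.le, by linarith⟩
    _ = q (v t) + (m + q (slope v t s - v')) * (s - t) := by ring

theorem le_mul_exp_of_liminf_slope_right_le {φ φ' : ℝ → ℝ} {t₀ t₁ R δ γ : ℝ}
    (hcont : ContinuousOn φ (Icc t₀ t₁))
    (hslope : ∀ t ∈ Ico t₀ t₁, ∀ r, φ' t < r → ∃ᶠ s in 𝓝[>] t, slope φ t s < r)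
    (hbound : ∀ t ∈ Ico t₀ t₁, φ t < R → φ' t ≤ -γ * φ t)
    (hφ₀ : 0 ≤ φ t₀) (hφR : φ t₀ < R) (hδ : 0 ≤ δ) (hδγ : δ < γ) {t : ℝ} (ht : t ∈ Icc t₀ t₁) :
    φ t ≤ φ t₀ * Real.exp (-δ * (t - t₀)) := by
  -- The bound on `φ'` is strict along the barrier only where `φ > 0`, so start it above `φ t₀`,
  -- which may be `0`.
  have hbarrier (c : ℝ) (hc : c ∈ Ioo (φ t₀) R) : φ t ≤ c * Real.exp (-δ * (t - t₀)) := by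
    have hc₀ : 0 < c := hφ₀.trans_lt hc.1
    have hderiv (s : ℝ) : HasDerivAt (fun s ↦ c * Real.exp (-δ * (s - t₀)))
        (-δ * (c * Real.exp (-δ * (s - t₀)))) s := by
      convert! ((((hasDerivAt_id s).sub_const t₀).const_mul (-δ)).exp.const_mul c) using 1
      simp only [id]; ring
    refine image_le_of_liminf_slope_right_lt_deriv_boundary hcont hslope (by simpa using hc.1.le)
      hderiv (fun s hs htouch ↦ ?_) ht
    have hpos : 0 < φ s := htouch ▸ by positivity
    have hexp : Real.exp (-δ * (s - t₀)) ≤ 1 :=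
      Real.exp_le_one_iff.2 (by nlinarith [sub_nonneg.2 hs.1])
    have hlt : φ s < R := by
      rw [htouch]; exact (mul_le_of_le_one_right hc₀.le hexp).trans_lt hc.2
    rw [← htouch]
    exact (hbound s hs hlt).trans_lt (by gcongr)
  have hlim : Tendsto (fun c ↦ c * Real.exp (-δ * (t - t₀))) (𝓝[>] φ t₀)
      (𝓝 (φ t₀ * Real.exp (-δ * (t - t₀)))) :=
    ((continuous_mul_const _).tendsto _).mono_left nhdsWithin_le_nhds
  exact ge_of_tendsto hlim (eventually_of_mem (Ioo_mem_nhdsGT hφR) hbarrier)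

end DiniDerivative

section Stability

variable {E : Type*} [NormedAddCommGroup E] [NormedSpace ℝ E]

/-- The equilibrium `a` of the autonomous equation `u' = f u` is exponentially stable with rate `δ`.
Solutions are only required on a half-open interval `[0, τ)`, and `ρ` and `M` do not depend
on `τ`. -/
def IsExpStable (f : E → E) (a : E) (δ : ℝ) : Prop :=
  ∃ ρ > 0, ∃ M ≥ (1 : ℝ), ∀ (τ : ℝ) (u : ℝ → E), IsIntegralCurveOn u (fun _ ↦ f) (Ico 0 τ) →
    ‖u 0 - a‖ ≤ ρ → ∀ t ∈ Ico 0 τ, ‖u t - a‖ ≤ M * ‖u 0 - a‖ * Real.exp (-δ * t)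

variable {f : E → E} {a : E} {q : Seminorm ℝ E} {δ γ η : ℝ}

theorem eventually_seminorm_eulerStep_le {A : E →L[ℝ] E} (hf : HasFDerivAt f A a) (ha : f a = 0)
    (hcont : Continuous q) (hle : ∀ x, ‖x‖ ≤ q x) (hη : 0 ≤ η) (hδγ : δ < γ)
    (hA : ∀ x, q (x + η • A x) ≤ (1 - η * γ) * q x) :
    ∀ᶠ y in 𝓝 a, q (y - a + η • f y) ≤ (1 - η * δ) * q (y - a) := by
  obtain ⟨K, hK, hqK⟩ := q.bound_of_continuous_normedSpace hcont
  have hε : 0 < (γ - δ) / K := div_pos (sub_pos.2 hδγ) hK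
  filter_upwards [hf.isLittleO.bound hε] with y hy
  rw [ha, sub_zero] at hy
  have hremainder : q (f y - A (y - a)) ≤ (γ - δ) * q (y - a) := calc
    q (f y - A (y - a)) ≤ K * ‖f y - A (y - a)‖ := hqK _
    _ ≤ K * ((γ - δ) / K * ‖y - a‖) := by gcongr
    _ = (γ - δ) * ‖y - a‖ := by field_simp
    _ ≤ (γ - δ) * q (y - a) := by gcongr; exact hle _
  calc q (y - a + η • f y) = q ((y - a + η • A (y - a)) + η • (f y - A (y - a))) := by
        rw [smul_sub]; abel_nf
    _ ≤ q (y - a + η • A (y - a)) + η * q (f y - A (y - a)) := by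
        grw [map_add_le_add, map_smul_eq_mul, Real.norm_of_nonneg hη]
    _ ≤ (1 - η * γ) * q (y - a) + η * ((γ - δ) * q (y - a)) := by gcongr; exact hA _
    _ = (1 - η * δ) * q (y - a) := by ring

theorem seminorm_sub_le_mul_exp_of_isIntegralCurveOn {R τ : ℝ} (hcont : Continuous q)
    (hη : 0 < η) (hδ : 0 ≤ δ) (hδγ : δ < γ)
    (hstep : ∀ y, q (y - a) < R → q (y - a + η • f y) ≤ (1 - η * γ) * q (y - a))
    {u : ℝ → E} (hu : IsIntegralCurveOn u (fun _ ↦ f) (Ico 0 τ)) (hu₀ : q (u 0 - a) < R)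
    {t : ℝ} (ht : t ∈ Ico 0 τ) : q (u t - a) ≤ q (u 0 - a) * Real.exp (-δ * t) := by
  have hsub : Icc 0 t ⊆ Ico 0 τ := Icc_subset_Ico_right ht.2
  have hright (s : ℝ) (hs : s ∈ Ico 0 t) :
      HasDerivWithinAt (fun s ↦ u s - a) (f (u s)) (Ici s) s :=
    ((hu s (hsub (Ico_subset_Icc_self hs))).mono_of_mem_nhdsWithin
      (mem_of_superset (Ico_mem_nhdsGE (hs.2.trans ht.2)) (Ico_subset_Ico_left hs.1))).sub_const a
  simpa using le_mul_exp_of_liminf_slope_right_le (φ := fun s ↦ q (u s - a))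
    (hcont.comp_continuousOn ((hu.continuousOn.mono hsub).sub continuousOn_const))
    (fun s hs _ hr ↦ (eventually_slope_seminorm_lt hcont (hright s hs) hη hr).frequently)
    (fun s _ hs ↦ by rw [div_le_iff₀ hη]; linarith [hstep (u s) hs])
    (apply_nonneg q _) hu₀ hδ hδγ (right_mem_Icc.2 ht.1)

theorem isExpStable_of_eventually_seminorm_eulerStep_le (hcont : Continuous q)
    (hle : ∀ x, ‖x‖ ≤ q x) (hη : 0 < η) (hδ : 0 ≤ δ) (hδγ : δ < γ)
    (hstep : ∀ᶠ y in 𝓝 a, q (y - a + η • f y) ≤ (1 - η * γ) * q (y - a)) :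
    IsExpStable f a δ := by
  obtain ⟨K, hK, hqK⟩ := q.bound_of_continuous_normedSpace hcont
  obtain ⟨R, hR, hball⟩ := Metric.eventually_nhds_iff.1 hstep
  refine ⟨R / (2 * K), by positivity, max K 1, le_max_right _ _, fun τ u hu hu₀ t ht ↦ ?_⟩
  have hq₀ : q (u 0 - a) < R := calc
    q (u 0 - a) ≤ K * ‖u 0 - a‖ := hqK _
    _ ≤ K * (R / (2 * K)) := by gcongr
    _ = R / 2 := by field_simp
    _ < R := half_lt_self hR
  calc ‖u t - a‖ ≤ q (u t - a) := hle _
    _ ≤ q (u 0 - a) * Real.exp (-δ * t) :=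
        seminorm_sub_le_mul_exp_of_isIntegralCurveOn hcont hη hδ hδγ
          (fun y hy ↦ hball ((dist_eq_norm y a).trans_lt ((hle _).trans_lt hy))) hu hq₀ ht
    _ ≤ max K 1 * ‖u 0 - a‖ * Real.exp (-δ * t) := by
        grw [hqK, ← le_max_left K 1]

theorem stmt_7_general [FiniteDimensional ℝ E] {A : E →L[ℝ] E} (hf : HasFDerivAt f A a)
    (ha : f a = 0) (hδ : 0 ≤ δ)
    (hroots : ∀ μ : ℂ, ((A : E →ₗ[ℝ] E).charpoly.map (algebraMap ℝ ℂ)).IsRoot μ → δ < -μ.re) :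
    IsExpStable f a δ := by
  obtain ⟨η, hη, γ, hδγ, hηγ, hpow⟩ := exists_one_add_smul_pow_isBigO_of_charpoly_roots A hroots
  obtain ⟨q, hcont, hle, hq⟩ :=
    exists_seminorm_apply_le_mul_of_pow_isBigO (1 + η • A) (by linarith) hpow
  obtain ⟨γ', hδγ', hγ'γ⟩ := exists_between hδγ
  exact isExpStable_of_eventually_seminorm_eulerStep_le hcont hle hη hδ hδγ'
    (eventually_seminorm_eulerStep_le hf ha hcont hle hη.le hγ'γ hq)

end Stability

/-- Theorem 5.2.1 (Liapunov's linearized stability theorem): if all complex roots of the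
characteristic polynomial of `Df(a)` have negative real part and `0 < δ` is below the
minimum of their negated real parts, then solutions starting close to `a` decay to `a`
exponentially at rate `δ`. -/
theorem stmt_7 {N : ℕ} (f : EuclideanSpace ℝ (Fin N) → EuclideanSpace ℝ (Fin N))
    (hf : ContDiff ℝ 1 f) (a : EuclideanSpace ℝ (Fin N)) (ha : f a = 0)
    (hneg : ∀ μ : ℂ,
      (((fderiv ℝ f a : EuclideanSpace ℝ (Fin N) →ₗ[ℝ] EuclideanSpace ℝ (Fin N)).charpoly.map
        (algebraMap ℝ ℂ)).IsRoot μ) → μ.re < 0)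
    (δ : ℝ) (hδpos : 0 < δ)
    (hδ : ∀ μ : ℂ,
      (((fderiv ℝ f a : EuclideanSpace ℝ (Fin N) →ₗ[ℝ] EuclideanSpace ℝ (Fin N)).charpoly.map
        (algebraMap ℝ ℂ)).IsRoot μ) → δ < -μ.re) :
    ∃ ρ > 0, ∃ M ≥ (1:ℝ), ∀ (τ : ℝ) (u : ℝ → EuclideanSpace ℝ (Fin N)),
      (∀ t ∈ Set.Ico (0:ℝ) τ, HasDerivWithinAt u (f (u t)) (Set.Ico 0 τ) t) →
      ‖u 0 - a‖ ≤ ρ →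
      ∀ t ∈ Set.Ico (0:ℝ) τ, ‖u t - a‖ ≤ M * ‖u 0 - a‖ * Real.exp (-δ * t) := by
  exact stmt_7_general (hf.differentiable one_ne_zero a).hasFDerivAt ha hδpos.le hδ
end

section
/- (Bellman's instability theorem.) Let f : ℝ^N → ℝ^N be continuously differentiable and let a ∈ ℝ^N satisfy f(a) = 0. Assume that at least one complex root of the characteristic polynomial of the Jacobian matrix Df(a) has positive real part. Then a is an unstable equilibrium of u′ = f(u): there exists ε > 0 such that for every δ > 0 there exist T ≥ 0 and a C¹ function u : [0,T] → ℝ^N with u′(t) = f(u(t)) for all t ∈ [0,T], ‖u(0) − a‖ ≤ δ, and ‖u(T) − a‖ > ε. -/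
open Set Polynomial

/-!
Let `μ` be a root with positive real part of the characteristic polynomial of `A = Df(a)`, and let
`S` be an inner product. The operator `Q ↦ Q(A·, ·) + Q(·, A·)` on bilinear forms has finite
spectrum, so some `0 < r < 2 Re μ` avoids it and `Q(A x, y) + Q(x, A y) = r Q(x, y) + S(x, y)` has a
solution `Q`. Summing this identity over the real and imaginary parts of an eigenvector for `μ`
shows that `Q(x, x) > 0` for some `x`. The surplus `S(x, x)` absorbs the nonlinear part of `f` near
`a`, so `Q(u - a, u - a)` grows at least like `exp (r t)` as long as a solution `u` stays near `a`.
As this quantity is bounded there, every solution starting at `a + s x` with `s > 0` small leaves.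
-/

open Metric Filter Topology TensorProduct

section LyapunovEquation

variable {K V : Type*} [Field K] [AddCommGroup V] [Module K V]

/-- The Lyapunov operator `Q ↦ Q(A·, ·) + Q(·, A·)` on bilinear forms: the derivative of
`t ↦ Q(u t, u t)` along `u' = A u` is its value at `Q`, evaluated at `(u t, u t)`. -/
def lyapunovOperator (A : Module.End K V) : Module.End K (LinearMap.BilinForm K V) where
  toFun Q := Q.compLeft A + Q.compRight A
  map_add' Q₁ Q₂ := by ext; simp; abel
  map_smul' c Q := by ext; simp

@[simp]
lemma lyapunovOperator_apply (A : Module.End K V) (Q : LinearMap.BilinForm K V) (x y : V) :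
    lyapunovOperator A Q x y = Q (A x) y + Q x (A y) := rfl

lemma exists_mem_forall_exists_eq_smul_add [FiniteDimensional K V] (L : Module.End K V) {s : Set K}
    (hs : s.Infinite) : ∃ r ∈ s, ∀ w, ∃ z, L z = r • z + w := by
  obtain ⟨r, hrs, hr⟩ := hs.exists_notMem_finite (Module.End.finite_spectrum L)
  rw [spectrum.notMem_iff, ← IsUnit.neg_iff, Module.End.isUnit_iff, neg_sub] at hr
  refine ⟨r, hrs, fun w => ?_⟩
  obtain ⟨z, hz⟩ := hr.surjective w
  exact ⟨z, sub_eq_iff_eq_add'.mp hz⟩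

end LyapunovEquation

section RealEndomorphism

variable {V : Type*} [AddCommGroup V] [Module ℝ V]

lemma exists_eq_one_tmul_add_I_tmul (z : ℂ ⊗[ℝ] V) :
    ∃ x y : V, z = 1 ⊗ₜ x + Complex.I ⊗ₜ y := by
  let e := TensorProduct.equivFinsuppOfBasisLeft (N := V) Complex.basisOneI
  refine ⟨e z 0, e z 1, e.injective ?_⟩
  ext i
  fin_cases i <;> simp [e]

lemma one_tmul_add_I_tmul_inj {x y x' y' : V} :
    (1 ⊗ₜ x + Complex.I ⊗ₜ y : ℂ ⊗[ℝ] V) = 1 ⊗ₜ x' + Complex.I ⊗ₜ y' ↔ x = x' ∧ y = y' := by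
  refine ⟨fun h => ?_, by rintro ⟨rfl, rfl⟩; rfl⟩
  have h' := congrArg (TensorProduct.equivFinsuppOfBasisLeft Complex.basisOneI) h
  exact ⟨by simpa using DFunLike.congr_fun h' 0, by simpa using DFunLike.congr_fun h' 1⟩

variable [FiniteDimensional ℝ V]

lemma exists_re_im_eigenvector {A : Module.End ℝ V} {μ : ℂ}
    (hμ : (A.charpoly.map (algebraMap ℝ ℂ)).IsRoot μ) :
    ∃ x y : V, (x ≠ 0 ∨ y ≠ 0) ∧ A x = μ.re • x - μ.im • y ∧ A y = μ.im • x + μ.re • y := by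
  rw [← LinearMap.charpoly_baseChange, ← Module.End.hasEigenvalue_iff_isRoot_charpoly] at hμ
  obtain ⟨z, hz, hz0⟩ := hμ.exists_hasEigenvector
  obtain ⟨x, y, rfl⟩ := exists_eq_one_tmul_add_I_tmul z
  refine ⟨x, y, ?_, one_tmul_add_I_tmul_inj.mp ?_⟩
  · by_contra! hxy
    simp [hxy] at hz0
  calc (1 ⊗ₜ A x + Complex.I ⊗ₜ A y : ℂ ⊗[ℝ] V)
      = μ • (1 ⊗ₜ x + Complex.I ⊗ₜ y) := by simpa using Module.End.mem_eigenspace_iff.mp hz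
    _ = (μ.re • 1 + μ.im • Complex.I) ⊗ₜ x + (μ.re • Complex.I - μ.im • 1) ⊗ₜ y := by
      rw [smul_add, smul_tmul', smul_tmul']
      congr 2 <;> apply Complex.ext <;> simp
    _ = _ := by
      simp only [add_tmul, sub_tmul, tmul_add, tmul_sub, smul_tmul]
      abel

lemma exists_pos_of_lyapunovOperator_eq {A : Module.End ℝ V} {μ : ℂ}
    (hμ : (A.charpoly.map (algebraMap ℝ ℂ)).IsRoot μ) {r : ℝ} (hr : r < 2 * μ.re)
    {Q S : LinearMap.BilinForm ℝ V} (hS : ∀ x ≠ 0, 0 < S x x)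
    (hQ : lyapunovOperator A Q = r • Q + S) : ∃ x, 0 < Q x x := by
  obtain ⟨x, y, hxy, hx, hy⟩ := exists_re_im_eigenvector hμ
  have hS_nonneg (z : V) : 0 ≤ S z z := by
    rcases eq_or_ne z 0 with rfl | hz
    · simp
    · exact (hS z hz).le
  have hS_pos : 0 < S x x + S y y := by
    rcases hxy with h | h
    · exact add_pos_of_pos_of_nonneg (hS x h) (hS_nonneg y)
    · exact add_pos_of_nonneg_of_pos (hS_nonneg x) (hS y h)
  have hsum : (2 * μ.re - r) * (Q x x + Q y y) = S x x + S y y := by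
    have hQx := LinearMap.congr_fun₂ hQ x x
    have hQy := LinearMap.congr_fun₂ hQ y y
    simp only [lyapunovOperator_apply, hx, hy, map_add, map_sub, map_smul, LinearMap.add_apply,
      LinearMap.sub_apply, LinearMap.smul_apply, smul_eq_mul] at hQx hQy
    linarith
  have hQ_pos : 0 < Q x x + Q y y :=
    pos_of_mul_pos_right (hsum ▸ hS_pos) (sub_pos.mpr hr).le
  by_contra! hneg
  linarith [hneg x, hneg y]

lemma exists_lyapunov_form {A : Module.End ℝ V} {μ : ℂ}
    (hμ : (A.charpoly.map (algebraMap ℝ ℂ)).IsRoot μ) (hre : 0 < μ.re)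
    {S : LinearMap.BilinForm ℝ V} (hS : ∀ x ≠ 0, 0 < S x x) :
    ∃ r > (0 : ℝ), ∃ Q, lyapunovOperator A Q = r • Q + S ∧ ∃ x, 0 < Q x x := by
  obtain ⟨r, ⟨hr0, hr⟩, hsolve⟩ := exists_mem_forall_exists_eq_smul_add
    (V := LinearMap.BilinForm ℝ V) (lyapunovOperator A) (Ioo_infinite (mul_pos two_pos hre))
  obtain ⟨Q, hQ⟩ := hsolve S
  exact ⟨r, hr0, Q, hQ, exists_pos_of_lyapunovOperator_eq hμ hr hS hQ⟩

end RealEndomorphism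

lemma exists_isCoercive (E : Type*) [NormedAddCommGroup E] [NormedSpace ℝ E]
    [FiniteDimensional ℝ E] : ∃ S : E →L[ℝ] E →L[ℝ] ℝ, IsCoercive S := by
  let e : E ≃L[ℝ] EuclideanSpace ℝ (Fin (Module.finrank ℝ E)) := toEuclidean
  obtain ⟨K, hK, he⟩ := e.toLinearMap.exists_antilipschitzWith
    (LinearMap.ker_eq_bot.mpr e.injective)
  refine ⟨(innerSL ℝ).bilinearComp e.toContinuousLinearMap e.toContinuousLinearMap, ((K : ℝ) ^ 2)⁻¹,
    by positivity, fun x => ?_⟩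
  have hx : ‖x‖ ≤ K * ‖e x‖ := ZeroHomClass.bound_of_antilipschitz _ he x
  calc ((K : ℝ) ^ 2)⁻¹ * ‖x‖ * ‖x‖ ≤ ((K : ℝ) ^ 2)⁻¹ * (K * ‖e x‖) * (K * ‖e x‖) := by gcongr
    _ = ‖e x‖ ^ 2 := by field_simp
    _ = inner ℝ (e x) (e x) := (real_inner_self_eq_norm_sq _).symm

lemma apply_self_pos_of_isCoercive {E : Type*} [NormedAddCommGroup E] [NormedSpace ℝ E]
    {S : E →L[ℝ] E →L[ℝ] ℝ} (hS : IsCoercive S) {x : E} (hx : x ≠ 0) : 0 < S x x := by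
  obtain ⟨C, hC, hSC⟩ := hS
  have := norm_pos_iff.mpr hx
  exact lt_of_lt_of_le (by positivity) (hSC x)

section Growth

lemma mul_exp_le_of_mul_le_hasDerivWithinAt {g g' : ℝ → ℝ} {r p q : ℝ} (hpq : p ≤ q)
    (hg : ∀ t ∈ Icc p q, HasDerivWithinAt g (g' t) (Icc p q) t)
    (hbound : ∀ t ∈ Ico p q, r * g t ≤ g' t) : g p * Real.exp (r * (q - p)) ≤ g q := by
  have hslope : ∀ t ∈ Ico p q, ∀ c, -g' t < c →
      ∃ᶠ z in 𝓝[>] t, (z - t)⁻¹ * ((-g) z - (-g) t) < c := fun t ht _ hc =>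
    ((hg t (Ico_subset_Icc_self ht)).neg.mono_of_mem_nhdsWithin
      (Icc_mem_nhdsGE_of_mem ht)).liminf_right_slope_le hc
  have h := le_gronwallBound_of_liminf_deriv_right_le (f := -g) (f' := fun t => -g' t)
    (δ := -g p) (K := r) (ε := 0)
    (HasDerivWithinAt.continuousOn fun t ht => (hg t ht).neg) hslope le_rfl
    (fun t ht => by simpa using hbound t ht) q (right_mem_Icc.mpr hpq)
  rw [gronwallBound_ε0, Pi.neg_apply] at h
  linarith

variable {E : Type*} [NormedAddCommGroup E] [NormedSpace ℝ E]

lemma bilin_mul_exp_le_of_isIntegralCurveOn {f : E → E} {a : E} {Q : E →L[ℝ] E →L[ℝ] ℝ} {r T : ℝ}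
    (hT : 0 ≤ T) {u : ℝ → E} (hu : IsIntegralCurveOn u (fun _ => f) (Icc 0 T))
    (hQ : ∀ t ∈ Icc 0 T,
      r * Q (u t - a) (u t - a) ≤ Q (f (u t)) (u t - a) + Q (u t - a) (f (u t))) :
    Q (u 0 - a) (u 0 - a) * Real.exp (r * T) ≤ Q (u T - a) (u T - a) := by
  have hderiv : ∀ t ∈ Icc 0 T, HasDerivWithinAt (fun t => Q (u t - a) (u t - a))
      (Q (f (u t)) (u t - a) + Q (u t - a) (f (u t))) (Icc 0 T) t := fun t ht =>
    have hsub := (hu t ht).sub_const a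
    (Q.hasFDerivAt.comp_hasDerivWithinAt t hsub).clm_apply hsub
  simpa using mul_exp_le_of_mul_le_hasDerivWithinAt hT hderiv
    fun t ht => hQ t (Ico_subset_Icc_self ht)

lemma eventually_mul_bilin_le_of_hasFDerivAt {f : E → E} {a : E} {A : E →L[ℝ] E}
    (hf : HasFDerivAt f A a) (ha : f a = 0) {Q S : E →L[ℝ] E →L[ℝ] ℝ} (hS : IsCoercive S) {r : ℝ}
    (hQ : ∀ x, Q (A x) x + Q x (A x) = r * Q x x + S x x) :
    ∀ᶠ x in 𝓝 a, r * Q (x - a) (x - a) ≤ Q (f x) (x - a) + Q (x - a) (f x) := by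
  obtain ⟨C, hC, hSC⟩ := hS
  have hε : 0 < C / (2 * (‖Q‖ + 1)) := by positivity
  filter_upwards [hf.isLittleO.def hε] with x hx
  rw [ha, sub_zero] at hx
  set y := x - a
  set g := f x - A y with hg
  have hQg : 2 * (‖Q‖ * ‖g‖ * ‖y‖) ≤ C * ‖y‖ * ‖y‖ := by
    have : 2 * (‖Q‖ * ‖g‖) ≤ C * ‖y‖ := calc
      2 * (‖Q‖ * ‖g‖) ≤ 2 * ((‖Q‖ + 1) * (C / (2 * (‖Q‖ + 1)) * ‖y‖)) := by gcongr; simp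
      _ = C * ‖y‖ := by field_simp
    nlinarith [norm_nonneg y]
  have hleft : |Q g y| ≤ ‖Q‖ * ‖g‖ * ‖y‖ := Q.le_opNorm₂ g y
  have hright : |Q y g| ≤ ‖Q‖ * ‖y‖ * ‖g‖ := Q.le_opNorm₂ y g
  have hfx : f x = A y + g := by rw [hg]; abel
  rw [hfx, map_add, map_add, add_apply]
  linarith [hQ y, hSC y, neg_abs_le (Q g y), neg_abs_le (Q y g)]

end Growth

section Continuation

variable {E : Type*} [NormedAddCommGroup E] [NormedSpace ℝ E]

lemma exists_isIntegralCurveOn_Icc_of_eq {v : ℝ → E → E} {u w : ℝ → E} {p q r : ℝ}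
    (hpq : p ≤ q) (hqr : q ≤ r) (hu : IsIntegralCurveOn u v (Icc p q))
    (hw : IsIntegralCurveOn w v (Icc q r)) (huw : u q = w q) :
    ∃ γ : ℝ → E, γ p = u p ∧ IsIntegralCurveOn γ v (Icc p r) := by
  let γ : ℝ → E := fun t => if t ≤ q then u t else w t
  have hγu : EqOn γ u (Icc p q) := fun t ht => if_pos ht.2
  have hγw : EqOn γ w (Icc q r) := by
    intro t ht
    rcases ht.1.eq_or_lt with rfl | h
    · exact (if_pos le_rfl).trans huw
    · exact if_neg h.not_ge
  refine ⟨γ, hγu (left_mem_Icc.mpr hpq), fun t _ => ?_⟩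
  rw [← Icc_union_Icc_eq_Icc hpq hqr]
  refine HasDerivWithinAt.union ?_ ?_
  · by_cases h : t ∈ Icc p q
    · exact hγu h ▸ (hu t h).congr hγu (hγu h)
    · exact HasFDerivWithinAt.of_notMem_closure (by rwa [isClosed_Icc.closure_eq])
  · by_cases h : t ∈ Icc q r
    · exact hγw h ▸ (hw t h).congr hγw (hγw h)
    · exact HasFDerivWithinAt.of_notMem_closure (by rwa [isClosed_Icc.closure_eq])

/-- Solutions of `u' = f u` starting in `s` exist for a time `τ` which does not depend on the
starting point. -/
def HasUniformLifespan (f : E → E) (s : Set E) (τ : ℝ) : Prop :=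
  ∀ t₀ : ℝ, ∀ x ∈ s, ∃ u : ℝ → E, u t₀ = x ∧ IsIntegralCurveOn u (fun _ => f) (Icc t₀ (t₀ + τ))

lemma HasUniformLifespan.mono {f : E → E} {s t : Set E} {τ : ℝ} (hs : HasUniformLifespan f s τ)
    (hts : t ⊆ s) : HasUniformLifespan f t τ := fun t₀ x hx => hs t₀ x (hts hx)

/-- Some solution of `u' = f u` starting at `x` is outside `s` after a finite time. As solutions
need not be unique, this does not say that every solution leaves `s`. -/
def Escapes (f : E → E) (s : Set E) (x : E) : Prop :=
  ∃ T ≥ (0 : ℝ), ∃ u : ℝ → E, IsIntegralCurveOn u (fun _ => f) (Icc 0 T) ∧ u 0 = x ∧ u T ∉ s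

lemma mem_of_not_escapes {f : E → E} {s : Set E} {x : E} (hx : ¬ Escapes f s x) {u : ℝ → E}
    {T : ℝ} (hu : IsIntegralCurveOn u (fun _ => f) (Icc 0 T)) (hu0 : u 0 = x) {t : ℝ}
    (ht : t ∈ Icc 0 T) : u t ∈ s := by
  by_contra hts
  exact hx ⟨t, ht.1, u, hu.mono (Icc_subset_Icc_right ht.2), hu0, hts⟩

lemma exists_isIntegralCurveOn_of_not_escapes {f : E → E} {s : Set E} {τ : ℝ} (hτ : 0 < τ)
    (hs : HasUniformLifespan f s τ) {x : E} (hx : ¬ Escapes f s x) (T : ℝ) :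
    ∃ u : ℝ → E, u 0 = x ∧ IsIntegralCurveOn u (fun _ => f) (Icc 0 T) := by
  have hmultiple (n : ℕ) :
      ∃ u : ℝ → E, u 0 = x ∧ IsIntegralCurveOn u (fun _ => f) (Icc 0 (n * τ)) := by
    induction n with
    | zero =>
      exact ⟨fun _ => x, rfl, fun t _ => HasFDerivWithinAt.of_subsingleton (by simp)⟩
    | succ n ih =>
      obtain ⟨u, hu0, hu⟩ := ih
      have hn : 0 ≤ n * τ := by positivity
      obtain ⟨w, hw0, hw⟩ :=
        hs (n * τ) (u (n * τ)) (mem_of_not_escapes hx hu hu0 (right_mem_Icc.mpr hn))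
      obtain ⟨γ, hγ0, hγ⟩ :=
        exists_isIntegralCurveOn_Icc_of_eq hn (by linarith) hu hw hw0.symm
      refine ⟨γ, hγ0.trans hu0, ?_⟩
      rwa [Nat.cast_succ, add_one_mul]
  obtain ⟨n, hn⟩ := Archimedean.arch T hτ
  obtain ⟨u, hu0, hu⟩ := hmultiple n
  exact ⟨u, hu0, hu.mono (Icc_subset_Icc_right (by rwa [← nsmul_eq_mul]))⟩

/-- Chetaev's argument: along a solution remaining in `s` for all time, `V` would be both bounded
and exponentially growing. -/
lemma escapes_of_mul_exp_le {f : E → E} {s : Set E} {τ : ℝ} (hτ : 0 < τ)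
    (hs : HasUniformLifespan f s τ) {V : E → ℝ} (hV : BddAbove (V '' s)) {r : ℝ} (hr : 0 < r)
    (hgrowth : ∀ T ≥ 0, ∀ u : ℝ → E, IsIntegralCurveOn u (fun _ => f) (Icc 0 T) →
      MapsTo u (Icc 0 T) s → V (u 0) * Real.exp (r * T) ≤ V (u T))
    {x : E} (hx : 0 < V x) : Escapes f s x := by
  by_contra hstay
  obtain ⟨M, hM⟩ := hV
  have htend : Tendsto (fun T => V x * Real.exp (r * T)) atTop atTop :=
    (Real.tendsto_exp_atTop.comp (tendsto_id.const_mul_atTop hr)).const_mul_atTop hx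
  obtain ⟨T, hMT, hT⟩ := ((htend.eventually_gt_atTop M).and (eventually_ge_atTop 0)).exists
  obtain ⟨u, rfl, hu⟩ := exists_isIntegralCurveOn_of_not_escapes hτ hs hstay T
  have hus : MapsTo u (Icc 0 T) s := fun t ht => mem_of_not_escapes hstay hu rfl ht
  have hVM : V (u T) ≤ M := hM (mem_image_of_mem V (hus (right_mem_Icc.mpr hT)))
  exact hMT.not_ge ((hgrowth T hT u hu hus).trans hVM)

lemma exists_hasUniformLifespan_of_lipschitzOnWith [CompleteSpace E] {f : E → E} {a : E}
    {K : NNReal} {s : Set E} (hs : s ∈ 𝓝 a) (hf : LipschitzOnWith K f s) :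
    ∃ U ∈ 𝓝 a, ∃ τ > 0, HasUniformLifespan f U τ := by
  obtain ⟨ρ, hρ, hρs⟩ := nhds_basis_closedBall.mem_iff.mp hs
  lift ρ to NNReal using hρ.le
  have hK := hf.mono hρs
  set L : NNReal := K * ρ + ‖f a‖₊ + 1
  have hL (x : E) (hx : x ∈ closedBall a ρ) : ‖f x‖ ≤ L := calc
    ‖f x‖ ≤ ‖f x - f a‖ + ‖f a‖ := norm_le_norm_sub_add _ _
    _ ≤ K * ‖x - a‖ + ‖f a‖ := by
      gcongr
      exact hK.norm_sub_le hx (mem_closedBall_self ρ.2)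
    _ ≤ K * ρ + ‖f a‖ := by
      gcongr
      exact mem_closedBall_iff_norm.mp hx
    _ ≤ L := by simp [L]
  have hL0 : (0 : ℝ) < L := by positivity
  have hτ : 0 < ρ / 2 / (L : ℝ) := by positivity
  refine ⟨closedBall a (ρ / 2 : NNReal), closedBall_mem_nhds a (by simpa using hρ),
    ρ / 2 / L, hτ, fun t₀ x hx => ?_⟩
  have ht₀ : t₀ ∈ Icc t₀ (t₀ + ρ / 2 / L) := ⟨le_rfl, by linarith⟩
  refine (IsPicardLindelof.of_time_independent (t₀ := ⟨t₀, ht₀⟩) hL hK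
    ?_).exists_eq_forall_mem_Icc_hasDerivWithinAt hx
  rw [add_sub_cancel_left, sub_self, max_eq_left hτ.le, mul_div_cancel₀ _ hL0.ne']
  push_cast
  linarith

end Continuation

section Bellman

variable {E : Type*} [NormedAddCommGroup E] [NormedSpace ℝ E]

lemma bddAbove_image_bilin_closedBall (Q : E →L[ℝ] E →L[ℝ] ℝ) (a : E) (ε : ℝ) :
    BddAbove ((fun x => Q (x - a) (x - a)) '' closedBall a ε) := by
  refine ⟨‖Q‖ * ε * ε, forall_mem_image.mpr fun x hx => ?_⟩
  have hx' : ‖x - a‖ ≤ ε := mem_closedBall_iff_norm.mp hx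
  have hε := (norm_nonneg _).trans hx'
  exact (le_abs_self _).trans ((Q.le_opNorm₂ _ _).trans (by gcongr))

lemma exists_norm_le_bilin_pos {Q : E →L[ℝ] E →L[ℝ] ℝ} (hQ : ∃ x, 0 < Q x x) {δ : ℝ}
    (hδ : 0 < δ) : ∃ x, ‖x‖ ≤ δ ∧ 0 < Q x x := by
  obtain ⟨x, hx⟩ := hQ
  have hx0 : 0 < ‖x‖ := norm_pos_iff.mpr fun h => by simp [h] at hx
  refine ⟨(δ / ‖x‖) • x, ?_, ?_⟩
  · rw [norm_smul, Real.norm_of_nonneg (by positivity), div_mul_cancel₀ _ hx0.ne']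
  · simp only [map_smul, smul_apply, smul_eq_mul]
    positivity

theorem stmt_8_general [FiniteDimensional ℝ E] {f : E → E} {a : E} (ha : f a = 0)
    {A : E →L[ℝ] E} (hf : HasFDerivAt f A a) {K : NNReal} {s : Set E} (hs : s ∈ 𝓝 a)
    (hlip : LipschitzOnWith K f s)
    (hroot : ∃ μ : ℂ, ((A : E →ₗ[ℝ] E).charpoly.map (algebraMap ℝ ℂ)).IsRoot μ ∧ 0 < μ.re) :
    ∃ ε > 0, ∀ δ > 0, ∃ T ≥ (0 : ℝ), ∃ u : ℝ → E,
      IsIntegralCurveOn u (fun _ => f) (Icc 0 T) ∧ ‖u 0 - a‖ ≤ δ ∧ ε < ‖u T - a‖ := by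
  have : CompleteSpace E := FiniteDimensional.complete ℝ E
  obtain ⟨μ, hμ, hre⟩ := hroot
  obtain ⟨S, hS⟩ := exists_isCoercive E
  obtain ⟨r, hr, Q₀, hQ, hpos⟩ := exists_lyapunov_form hμ hre (S := S.toBilinForm)
    fun x hx => apply_self_pos_of_isCoercive hS hx
  let Q : E →L[ℝ] E →L[ℝ] ℝ := Q₀.toContinuousBilinearMap
  have hgrowth := eventually_mul_bilin_le_of_hasFDerivAt hf ha (Q := Q) hS
    fun x => LinearMap.congr_fun₂ hQ x x
  obtain ⟨U, hU, τ, hτ, hlife⟩ := exists_hasUniformLifespan_of_lipschitzOnWith hs hlip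
  obtain ⟨ε, hε, hball⟩ := nhds_basis_closedBall.mem_iff.mp (inter_mem hU hgrowth)
  refine ⟨ε, hε, fun δ hδ => ?_⟩
  obtain ⟨x, hxδ, hx⟩ := exists_norm_le_bilin_pos (Q := Q) hpos hδ
  obtain ⟨T, hT, u, hu, hu0, huT⟩ : Escapes f (closedBall a ε) (a + x) :=
    escapes_of_mul_exp_le hτ (hlife.mono (hball.trans inter_subset_left))
      (bddAbove_image_bilin_closedBall Q a ε) hr
      (fun T hT u hu hmaps => bilin_mul_exp_le_of_isIntegralCurveOn hT hu
        fun t ht => (hball (hmaps ht)).2)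
      (by simpa using hx)
  exact ⟨T, hT, u, hu, by simpa [hu0] using hxδ, not_le.mp (mt mem_closedBall_iff_norm.mpr huT)⟩

end Bellman

/-- Theorem 5.4.1 (Bellman's instability theorem): if some complex root of the
characteristic polynomial of `Df(a)` has positive real part, then the equilibrium `a`
of `u' = f(u)` is unstable. -/
theorem stmt_8 {N : ℕ} (f : EuclideanSpace ℝ (Fin N) → EuclideanSpace ℝ (Fin N))
    (hf : ContDiff ℝ 1 f) (a : EuclideanSpace ℝ (Fin N)) (ha : f a = 0)
    (hroot : ∃ μ : ℂ,
      (((fderiv ℝ f a : EuclideanSpace ℝ (Fin N) →ₗ[ℝ] EuclideanSpace ℝ (Fin N)).charpoly.map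
        (algebraMap ℝ ℂ)).IsRoot μ) ∧ 0 < μ.re) :
    ∃ ε > 0, ∀ δ > 0, ∃ T ≥ (0:ℝ), ∃ u : ℝ → EuclideanSpace ℝ (Fin N),
      (∀ t ∈ Set.Icc (0:ℝ) T, HasDerivWithinAt u (f (u t)) (Set.Icc 0 T) t) ∧
      ‖u 0 - a‖ ≤ δ ∧ ε < ‖u T - a‖ := by
  obtain ⟨K, s, hs, hlip⟩ := hf.contDiffAt.exists_lipschitzOnWith
  exact stmt_8_general ha (hf.differentiable one_ne_zero a).hasFDerivAt hs hlip hroot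
end

section
/- (Łojasiewicz convergence theorem for the damped second order system.) Let Φ : ℝ^N → ℝ be twice continuously differentiable and assume that at every critical point a (i.e. ∇Φ(a) = 0) there exist c_a > 0, σ_a > 0 and θ_a ∈ (0,1/2] such that ‖∇Φ(u)‖ ≥ c_a·|Φ(u) − Φ(a)|^{1−θ_a} whenever ‖u − a‖ < σ_a (this holds in particular when Φ is real analytic). Let u : [0,∞) → ℝ^N be a twice differentiable solution of u″ + u′ + ∇Φ(u) = 0 such that u and u′ are bounded. Then there exists a ∈ ℝ^N with ∇Φ(a) = 0 such that ‖u′(t)‖ + ‖u(t) − a‖ → 0 as t → ∞. Moreover, if θ ∈ (0,1/2] is any exponent for which the above inequality holds at a, then ‖u(t) − a‖ ≤ C·t^{−θ/(1−2θ)} if 0 < θ < 1/2, and ‖u(t) − a‖ ≤ C·e^{−δt} for some δ > 0 if θ = 1/2. -/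
open Filter Set

/-!
The mechanical energy `‖u'‖² / 2 + Φ(u)` only dissipates `‖u'‖²`. Adding `ε ⟪∇Φ(u), u'⟫` with `ε`
small gives an energy that dissipates a multiple of `r² = ‖u'‖² + ‖∇Φ(u)‖²`, so by Barbălat's
argument `r → 0`, and every cluster point `a` of `u` is critical with `Φ(a)` the limit of the
energy. Let `h` be the energy minus `Φ(a)`. The Łojasiewicz inequality at `a` gives
`h ^ (1 - θ) ≤ K r` near `a`, hence `r ≤ -C (h ^ θ)'`: while `u` stays near `a`, the length it
travels is bounded by the decrease of `C h ^ θ`. Once `u` is close enough to `a` it is therefore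
trapped there, and it converges with `‖u - a‖ ≤ C h ^ θ`. The differential inequality
`h' ≤ -γ h ^ (2 (1 - θ))` gives the rates.
-/

open Asymptotics
open scoped Topology Gradient RealInnerProductSpace

theorem eq_of_mapClusterPt_of_tendsto {ι X Y : Type*} [TopologicalSpace X] [TopologicalSpace Y]
    [T2Space Y] {F : Filter ι} {u : ι → X} {f : X → Y} {x : X} {y : Y} (hx : MapClusterPt x F u)
    (hf : ContinuousAt f x) (hy : Tendsto (fun i => f (u i)) F (𝓝 y)) : f x = y :=
  eq_of_nhds_neBot (ClusterPt.mono (hx.continuousAt_comp hf) hy)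

theorem exists_tendsto_atTop_of_antitoneOn {ι α : Type*} [LinearOrder ι]
    [ConditionallyCompleteLinearOrder α] [TopologicalSpace α] [OrderTopology α] {h : ι → α} {t₀ : ι}
    (hanti : AntitoneOn h (Ici t₀)) (hbdd : BddBelow (h '' Ici t₀)) :
    ∃ l, Tendsto h atTop (𝓝 l) := by
  rw [image_eq_range] at hbdd
  exact ⟨_, tendsto_comp_val_Ici_atTop.1
    (tendsto_atTop_ciInf (antitoneOn_iff_antitone.1 hanti) hbdd)⟩

theorem exists_pos_forall_norm_le_of_isBigO_atTop {E : Type*} [SeminormedAddCommGroup E]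
    {f : ℝ → E} {g : ℝ → ℝ} {t₀ : ℝ} (hf : ContinuousOn f (Ici t₀)) (hg : ContinuousOn g (Ici t₀))
    (hpos : ∀ t ≥ t₀, 0 < g t) (hfg : f =O[atTop] g) :
    ∃ C > 0, ∀ t ≥ t₀, ‖f t‖ ≤ C * g t := by
  obtain ⟨C₁, hC₁⟩ := hfg.bound
  obtain ⟨T, hT⟩ := eventually_atTop.1 hC₁
  have hcompact : f =O[𝓟 (Icc t₀ T)] g :=
    ((hf.mono Icc_subset_Ici_self).isBigO_principal isCompact_Icc (c := (1 : ℝ)) (by simp)).trans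
      ((hg.mono Icc_subset_Ici_self).isBigO_rev_principal isCompact_Icc
        (fun t ht => (hpos t ht.1).ne') 1)
  have htail : f =O[𝓟 (Ici T)] g := isBigO_principal.2 ⟨C₁, hT⟩
  obtain ⟨C, hC, hbound⟩ := (hcompact.sup htail).exists_pos
  rw [sup_principal, isBigOWith_principal] at hbound
  refine ⟨C, hC, fun t ht => ?_⟩
  have hmem : t ∈ Icc t₀ T ∪ Ici T := (le_total t T).imp (fun h => ⟨ht, h⟩) id
  simpa only [Real.norm_of_nonneg (hpos t ht).le] using hbound t hmem

theorem tendsto_const_mul_rpow_zero {ι : Type*} {F : Filter ι} {h : ι → ℝ} {θ : ℝ}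
    (h0 : Tendsto h F (𝓝 0)) (hθ : 0 < θ) (C : ℝ) : Tendsto (fun t => C * h t ^ θ) F (𝓝 0) := by
  simpa [Real.zero_rpow hθ.ne'] using (h0.rpow_const (Or.inr hθ.le)).const_mul C

-- As `w` grows at rate at most `L`, a large value `w t` forces `w` to be large on all of `[s, t]`,
-- and hence `h` to drop.
theorem le_mul_sub_add_div_of_deriv_le {h w : ℝ → ℝ} {s t L : ℝ} (hst : s < t) (hL : 0 ≤ L)
    (hh : ∀ x ∈ Icc s t, DifferentiableAt ℝ h x) (hdis : ∀ x ∈ Icc s t, deriv h x ≤ -w x)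
    (hw : ∀ x ∈ Icc s t, DifferentiableAt ℝ w x) (hwL : ∀ x ∈ Icc s t, deriv w x ≤ L) :
    w t ≤ L * (t - s) + (h s - h t) / (t - s) := by
  have hlow : ∀ x ∈ Icc s t, w t - L * (t - s) ≤ w x := fun x hx => by
    have hwx : w t - w x ≤ L * (t - x) :=
      (convex_Icc s t).image_sub_le_mul_sub_of_deriv_le
        (fun y hy => (hw y hy).continuousAt.continuousWithinAt)
        (fun y hy => (hw y (interior_subset hy)).differentiableWithinAt)
        (fun y hy => hwL y (interior_subset hy)) x hx t (right_mem_Icc.2 hst.le) hx.2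
    have hmono : L * (t - x) ≤ L * (t - s) := by gcongr; exact hx.1
    linarith
  have hdrop : h t - h s ≤ -(w t - L * (t - s)) * (t - s) :=
    (convex_Icc s t).image_sub_le_mul_sub_of_deriv_le
      (fun y hy => (hh y hy).continuousAt.continuousWithinAt)
      (fun y hy => (hh y (interior_subset hy)).differentiableWithinAt)
      (fun y hy => (hdis y (interior_subset hy)).trans (neg_le_neg (hlow y (interior_subset hy))))
      s (left_mem_Icc.2 hst.le) t (right_mem_Icc.2 hst.le) hst.le
  rw [← sub_le_iff_le_add', le_div_iff₀ (sub_pos.2 hst)]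
  linarith

theorem tendsto_zero_of_le_neg_deriv {h w : ℝ → ℝ} {t₀ L l : ℝ}
    (hh : ∀ t ≥ t₀, DifferentiableAt ℝ h t) (hdis : ∀ t ≥ t₀, deriv h t ≤ -w t)
    (hw : ∀ t ≥ t₀, DifferentiableAt ℝ w t) (hw0 : ∀ t ≥ t₀, 0 ≤ w t)
    (hwL : ∀ t ≥ t₀, deriv w t ≤ L) (hl : Tendsto h atTop (𝓝 l)) :
    Tendsto w atTop (𝓝 0) := by
  have hupper : ∀ η > 0, ∀ᶠ t in atTop, w t < η := fun η hη => by
    obtain ⟨d, hd, hdη⟩ : ∃ d > 0, |L| * d < η := exists_pos_mul_lt hη |L|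
    have hdiff : Tendsto (fun t => |L| * d + (h (t - d) - h t) / d) atTop (𝓝 (|L| * d)) := by
      have hshift := hl.comp (tendsto_atTop_add_const_right atTop (-d) tendsto_id)
      simpa [sub_eq_add_neg] using ((hshift.sub hl).div_const d).const_add (|L| * d)
    filter_upwards [hdiff.eventually_lt_const hdη, eventually_ge_atTop (t₀ + d)] with t hlt ht
    refine lt_of_le_of_lt ?_ hlt
    have hge : ∀ x ∈ Icc (t - d) t, x ≥ t₀ := fun x hx => (le_sub_iff_add_le.2 ht).trans hx.1
    simpa only [sub_sub_cancel] using le_mul_sub_add_div_of_deriv_le (sub_lt_self t hd)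
      (abs_nonneg L) (fun x hx => hh x (hge x hx)) (fun x hx => hdis x (hge x hx))
      (fun x hx => hw x (hge x hx)) (fun x hx => (hwL x (hge x hx)).trans (le_abs_self L))
  refine tendsto_order.2 ⟨fun η hη => ?_, hupper⟩
  exact (eventually_ge_atTop t₀).mono fun t ht => hη.trans_le (hw0 t ht)

theorem eqOn_zero_Ici_of_antitoneOn {h : ℝ → ℝ} {x : ℝ} (hanti : AntitoneOn h (Ici x))
    (h0 : ∀ y ≥ x, 0 ≤ h y) (hx : h x = 0) : EqOn h 0 (Ici x) := fun y hy =>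
  le_antisymm ((hanti self_mem_Ici hy hy).trans_eq hx) (h0 y hy)

theorem deriv_eq_zero_of_antitoneOn_Ici {h : ℝ → ℝ} {x : ℝ} (hh : DifferentiableAt ℝ h x)
    (hanti : AntitoneOn h (Ici x)) (h0 : ∀ y ≥ x, 0 ≤ h y) (hx : h x = 0) : deriv h x = 0 :=
  (uniqueDiffWithinAt_Ici x).eq_deriv _ hh.hasDerivAt.hasDerivWithinAt
    ((hasDerivWithinAt_const x (Ici x) (0 : ℝ)).congr (eqOn_zero_Ici_of_antitoneOn hanti h0 hx) hx)

-- Covers `h x = 0` with `θ < 1`, where `fun y => y ^ θ` is not differentiable at `h x`.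
theorem hasDerivWithinAt_rpow_of_antitoneOn_Ici {h : ℝ → ℝ} {x θ : ℝ} (hθ : θ ≠ 0)
    (hh : DifferentiableAt ℝ h x) (hanti : AntitoneOn h (Ici x)) (h0 : ∀ y ≥ x, 0 ≤ h y) :
    HasDerivWithinAt (fun y => h y ^ θ) (deriv h x * θ * h x ^ (θ - 1)) (Ici x) x := by
  by_cases hx : h x = 0
  · rw [deriv_eq_zero_of_antitoneOn_Ici hh hanti h0 hx, zero_mul, zero_mul]
    refine (hasDerivWithinAt_const x (Ici x) (0 : ℝ)).congr (fun y hy => ?_) ?_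
    · simp [eqOn_zero_Ici_of_antitoneOn hanti h0 hx hy, hθ]
    · simp [hx, hθ]
  · exact (hh.hasDerivAt.rpow_const (Or.inl hx)).hasDerivWithinAt

theorem norm_sub_le_sub_of_norm_deriv_le_neg_deriv {E : Type*} [NormedAddCommGroup E]
    [NormedSpace ℝ E] {u u' : ℝ → E} {G G' : ℝ → ℝ} {a : E} {s t σ : ℝ}
    (hu : ∀ x ≥ s, HasDerivAt u (u' x) x) (hG : ContinuousOn G (Ici s))
    (hG' : ∀ x ≥ s, HasDerivWithinAt G (G' x) (Ici x) x) (hG0 : ∀ x ≥ s, 0 ≤ G x)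
    (hle : ∀ x ≥ s, ‖u x - a‖ < σ → ‖u' x‖ ≤ -G' x) (hstart : ‖u s - a‖ + G s < σ)
    (hst : s ≤ t) :
    ‖u t - u s‖ ≤ G s - G t := by
  -- The fencing theorem needs a strict inequality of derivatives, which the slope `δ` provides.
  have hfence : ∀ δ > 0, δ * (t - s) < σ - (‖u s - a‖ + G s) →
      ‖u t - u s‖ ≤ G s - G t + δ * (t - s) := fun δ hδ hδσ => by
    refine image_norm_le_of_norm_deriv_right_lt_deriv_boundary' (a := s) (b := t)
      (f := fun x => u x - u s) (f' := u') (B := fun x => G s - G x + δ * (x - s))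
      (B' := fun x => -G' x + δ) ?_ ?_ (by simp) ?_ ?_ ?_ (right_mem_Icc.2 hst)
    · exact fun x hx => ((hu x hx.1).sub_const _).continuousAt.continuousWithinAt
    · exact fun x hx => ((hu x hx.1).sub_const _).hasDerivWithinAt
    · have := hG.mono (Icc_subset_Ici_self : Icc s t ⊆ Ici s)
      fun_prop
    · intro x hx
      have hlin : HasDerivAt (fun x => δ * (x - s)) δ x := by
        simpa using ((hasDerivAt_id x).sub_const s).const_mul δ
      exact ((hG' x hx.1).const_sub (G s)).add hlin.hasDerivWithinAt
    · intro x hx hxB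
      have hδx : δ * (x - s) ≤ δ * (t - s) := by gcongr; exact hx.2.le
      have hball : ‖u x - a‖ < σ := by
        linarith [norm_sub_le_norm_sub_add_norm_sub (u x) (u s) a, hG0 x hx.1]
      linarith [hle x hx.1 hball]
  have hlim : Tendsto (fun δ => δ * (t - s)) (𝓝[>] 0) (𝓝 0) :=
    tendsto_nhdsWithin_of_tendsto_nhds (Continuous.tendsto' (by fun_prop) _ _ (by simp))
  refine ge_of_tendsto (by simpa using hlim.const_add (G s - G t)) ?_
  filter_upwards [hlim.eventually_lt_const (sub_pos.2 hstart), self_mem_nhdsWithin] with δ hδσ hδ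
  exact hfence δ hδ hδσ

theorem mul_sub_le_rpow_neg_of_deriv_le {h : ℝ → ℝ} {q γ s t : ℝ} (hq : 0 ≤ q) (hst : s ≤ t)
    (hh : ∀ x ∈ Icc s t, DifferentiableAt ℝ h x) (hpos : ∀ x ∈ Icc s t, 0 < h x)
    (hdec : ∀ x ∈ Icc s t, deriv h x ≤ -γ * h x ^ (1 + q)) :
    q * γ * (t - s) ≤ h t ^ (-q) := by
  have hderiv : ∀ x ∈ Icc s t,
      HasDerivAt (fun x => h x ^ (-q)) (deriv h x * -q * h x ^ (-q - 1)) x := fun x hx =>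
    (hh x hx).hasDerivAt.rpow_const (Or.inl (hpos x hx).ne')
  have hgrowth : ∀ x ∈ Icc s t, q * γ ≤ deriv h x * -q * h x ^ (-q - 1) := fun x hx => by
    have hcancel : h x ^ (1 + q) * h x ^ (-q - 1) = 1 := by
      rw [← Real.rpow_add (hpos x hx)]
      ring_nf
      exact Real.rpow_zero _
    have hfactor : 0 ≤ q * h x ^ (-q - 1) := mul_nonneg hq (Real.rpow_nonneg (hpos x hx).le _)
    calc q * γ = -(-γ * h x ^ (1 + q)) * (q * h x ^ (-q - 1)) := by
          linear_combination (-(q * γ)) * hcancel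
      _ ≤ -deriv h x * (q * h x ^ (-q - 1)) := by gcongr; exact hdec x hx
      _ = deriv h x * -q * h x ^ (-q - 1) := by ring
  have hmvt := (convex_Icc s t).mul_sub_le_image_sub_of_le_deriv
    (fun x hx => (hderiv x hx).continuousAt.continuousWithinAt)
    (fun x hx => (hderiv x (interior_subset hx)).differentiableAt.differentiableWithinAt)
    (fun x hx => (hderiv x (interior_subset hx)).deriv ▸ hgrowth x (interior_subset hx))
    s (left_mem_Icc.2 hst) t (right_mem_Icc.2 hst) hst
  linarith [Real.rpow_nonneg (hpos s (left_mem_Icc.2 hst)).le (-q)]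

theorem isBigO_rpow_of_deriv_le_neg_mul_rpow {h : ℝ → ℝ} {q γ : ℝ} (hq : 0 < q) (hγ : 0 < γ)
    (hh : ∀ᶠ t in atTop, DifferentiableAt ℝ h t) (h0 : ∀ᶠ t in atTop, 0 ≤ h t)
    (hdec : ∀ᶠ t in atTop, deriv h t ≤ -γ * h t ^ (1 + q)) :
    h =O[atTop] fun t => t ^ (-(1 / q)) := by
  obtain ⟨T, hT⟩ := eventually_atTop.1 (hh.and (h0.and hdec))
  have hanti : AntitoneOn h (Ici T) := antitoneOn_of_deriv_nonpos (convex_Ici T)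
    (fun t ht => (hT t ht).1.continuousAt.continuousWithinAt)
    (fun t ht => (hT t (interior_subset ht)).1.differentiableWithinAt) fun t ht => by
      have hpow := Real.rpow_nonneg (hT t (interior_subset ht)).2.1 (1 + q)
      nlinarith [(hT t (interior_subset ht)).2.2]
  refine IsBigO.of_bound ((q * γ / 2) ^ (-(1 / q))) ?_
  filter_upwards [eventually_ge_atTop T, eventually_ge_atTop (2 * T), eventually_gt_atTop 0]
    with t hTt h2T ht
  rw [Real.norm_of_nonneg (hT t hTt).2.1, Real.norm_of_nonneg (by positivity),
    ← Real.mul_rpow (by positivity) ht.le]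
  rcases (hT t hTt).2.1.eq_or_lt with hzero | hpos
  · rw [← hzero]
    positivity
  have hlower : q * γ / 2 * t ≤ h t ^ (-q) := calc
    q * γ / 2 * t ≤ q * γ * (t - T) := by
      have : q * γ * (t / 2) ≤ q * γ * (t - T) := by gcongr; linarith
      linarith
    _ ≤ h t ^ (-q) := mul_sub_le_rpow_neg_of_deriv_le hq.le hTt (fun x hx => (hT x hx.1).1)
      (fun x hx => hpos.trans_le (hanti hx.1 hTt hx.2)) (fun x hx => (hT x hx.1).2.2)
  calc h t = (h t ^ (-q)) ^ (-(1 / q)) := by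
        rw [← Real.rpow_mul hpos.le, neg_mul_neg, mul_one_div_cancel hq.ne', Real.rpow_one]
    _ ≤ (q * γ / 2 * t) ^ (-(1 / q)) :=
        Real.rpow_le_rpow_of_nonpos (by positivity) hlower (by simp [hq.le])

theorem isBigO_exp_of_deriv_le_neg_mul {h : ℝ → ℝ} {γ : ℝ}
    (hh : ∀ᶠ t in atTop, DifferentiableAt ℝ h t) (h0 : ∀ᶠ t in atTop, 0 ≤ h t)
    (hdec : ∀ᶠ t in atTop, deriv h t ≤ -γ * h t) :
    h =O[atTop] fun t => Real.exp (-γ * t) := by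
  obtain ⟨T, hT⟩ := eventually_atTop.1 (hh.and (h0.and hdec))
  have hderiv : ∀ t ≥ T, HasDerivAt (fun x => h x * Real.exp (γ * x))
      ((deriv h t + γ * h t) * Real.exp (γ * t)) t := fun t ht =>
    ((hT t ht).1.hasDerivAt.mul ((hasDerivAt_id' t).const_mul γ).exp).congr_deriv (by ring)
  have hanti : AntitoneOn (fun x => h x * Real.exp (γ * x)) (Ici T) :=
    antitoneOn_of_deriv_nonpos (convex_Ici T)
      (fun t ht => (hderiv t ht).continuousAt.continuousWithinAt)
      (fun t ht => (hderiv t (interior_subset ht)).differentiableAt.differentiableWithinAt)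
      fun t ht => by
        rw [(hderiv t (interior_subset ht)).deriv]
        exact mul_nonpos_of_nonpos_of_nonneg (by linarith [(hT t (interior_subset ht)).2.2])
          (Real.exp_pos _).le
  refine IsBigO.of_bound (h T * Real.exp (γ * T)) ?_
  filter_upwards [eventually_ge_atTop T] with t ht
  rw [Real.norm_of_nonneg (hT t ht).2.1, Real.norm_of_nonneg (Real.exp_pos _).le, neg_mul,
    Real.exp_neg, ← div_eq_mul_inv, le_div_iff₀ (Real.exp_pos _)]
  exact hanti self_mem_Ici ht ht

section DissipatesEnergy

variable {E : Type*} [NormedAddCommGroup E] [NormedSpace ℝ E]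

/-- On `[0, ∞)` the curve `u`, with velocity `u'`, has an energy `h` that decreases at least at the
rate `e * r ^ 2`, where `r` bounds the speed of `u`. -/
structure DissipatesEnergy (u u' : ℝ → E) (h r : ℝ → ℝ) (e : ℝ) : Prop where
  pos : 0 < e
  hasDerivAt : ∀ t ≥ 0, HasDerivAt u (u' t) t
  differentiableAt : ∀ t ≥ 0, DifferentiableAt ℝ h t
  norm_deriv_le : ∀ t ≥ 0, ‖u' t‖ ≤ r t
  deriv_le : ∀ t ≥ 0, deriv h t ≤ -e * r t ^ 2

namespace DissipatesEnergy

variable {u u' : ℝ → E} {h r : ℝ → ℝ} {e : ℝ}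

theorem continuousOn_sub_const (hd : DissipatesEnergy u u' h r e) (a : E) :
    ContinuousOn (fun t => u t - a) (Ici 0) := fun t ht =>
  ((hd.hasDerivAt t ht).sub_const a).continuousAt.continuousWithinAt

theorem rate_nonneg (hd : DissipatesEnergy u u' h r e) {t : ℝ} (ht : 0 ≤ t) : 0 ≤ r t :=
  (norm_nonneg _).trans (hd.norm_deriv_le t ht)

theorem antitoneOn (hd : DissipatesEnergy u u' h r e) : AntitoneOn h (Ici 0) :=
  antitoneOn_of_deriv_nonpos (convex_Ici 0)
    (fun t ht => (hd.differentiableAt t ht).continuousAt.continuousWithinAt)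
    (fun t ht => (hd.differentiableAt t (interior_subset ht)).differentiableWithinAt)
    fun t ht => (hd.deriv_le t (interior_subset ht)).trans
      (mul_nonpos_of_nonpos_of_nonneg (neg_nonpos.2 hd.pos.le) (sq_nonneg _))

theorem sub_const (hd : DissipatesEnergy u u' h r e) (c : ℝ) :
    DissipatesEnergy u u' (fun t => h t - c) r e where
  pos := hd.pos
  hasDerivAt := hd.hasDerivAt
  differentiableAt t ht := (hd.differentiableAt t ht).sub_const c
  norm_deriv_le := hd.norm_deriv_le
  deriv_le t ht := by simpa only [deriv_sub_const] using hd.deriv_le t ht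

theorem tendsto_rate (hd : DissipatesEnergy u u' h r e) {L l : ℝ}
    (hr : ∀ t ≥ 0, DifferentiableAt ℝ (fun t => r t ^ 2) t)
    (hrL : ∀ t ≥ 0, deriv (fun t => r t ^ 2) t ≤ L) (hl : Tendsto h atTop (𝓝 l)) :
    Tendsto r atTop (𝓝 0) := by
  have hsq : Tendsto (fun t => e * r t ^ 2) atTop (𝓝 0) := by
    refine tendsto_zero_of_le_neg_deriv (L := e * L) hd.differentiableAt
      (fun t ht => (hd.deriv_le t ht).trans_eq (neg_mul _ _)) (fun t ht => (hr t ht).const_mul e)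
      (fun t _ => mul_nonneg hd.pos.le (sq_nonneg _)) (fun t ht => ?_) hl
    rw [deriv_const_mul e (hr t ht)]
    exact mul_le_mul_of_nonneg_left (hrL t ht) hd.pos.le
  have hsqrt : Tendsto (fun t => √(e⁻¹ * (e * r t ^ 2))) atTop (𝓝 0) := by
    simpa using (hsq.const_mul e⁻¹).sqrt
  refine hsqrt.congr' ((eventually_ge_atTop 0).mono fun t ht => ?_)
  rw [inv_mul_cancel_left₀ hd.pos.ne', Real.sqrt_sq (hd.rate_nonneg ht)]

theorem energy_nonneg (hd : DissipatesEnergy u u' h r e) (h0 : Tendsto h atTop (𝓝 0)) {t : ℝ}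
    (ht : 0 ≤ t) : 0 ≤ h t :=
  le_of_tendsto h0 ((eventually_ge_atTop t).mono fun _ hs =>
    hd.antitoneOn ht (mem_Ici.2 (ht.trans hs)) hs)

theorem hasDerivWithinAt_energy_rpow (hd : DissipatesEnergy u u' h r e)
    (h0 : Tendsto h atTop (𝓝 0)) {θ t : ℝ} (hθ : θ ≠ 0) (ht : 0 ≤ t) :
    HasDerivWithinAt (fun x => h x ^ θ) (deriv h t * θ * h t ^ (θ - 1)) (Ici t) t :=
  hasDerivWithinAt_rpow_of_antitoneOn_Ici hθ (hd.differentiableAt t ht)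
    (hd.antitoneOn.mono (Ici_subset_Ici.2 ht)) fun _ hx => hd.energy_nonneg h0 (ht.trans hx)

theorem rate_eq_zero_of_deriv_eq_zero (hd : DissipatesEnergy u u' h r e) {t : ℝ} (ht : 0 ≤ t)
    (hderiv : deriv h t = 0) : r t = 0 := by
  have hle := hd.deriv_le t ht
  have hsq : r t ^ 2 ≤ 0 := by nlinarith [hd.pos]
  exact (pow_eq_zero_iff two_ne_zero).1 (le_antisymm hsq (sq_nonneg _))

theorem rate_le_neg_deriv_energy_rpow (hd : DissipatesEnergy u u' h r e)
    (h0 : Tendsto h atTop (𝓝 0)) {θ K t : ℝ} (hθ : 0 < θ) (hK : 0 < K) (ht : 0 ≤ t)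
    (hloj : h t ^ (1 - θ) ≤ K * r t) :
    r t ≤ -(K / (θ * e) * (deriv h t * θ * h t ^ (θ - 1))) := by
  have he := hd.pos
  rcases (hd.energy_nonneg h0 ht).eq_or_lt with hzero | hpos
  · have hderiv : deriv h t = 0 := deriv_eq_zero_of_antitoneOn_Ici (hd.differentiableAt t ht)
      (hd.antitoneOn.mono (Ici_subset_Ici.2 ht)) (fun _ hx => hd.energy_nonneg h0 (ht.trans hx))
      hzero.symm
    simp [hderiv, hd.rate_eq_zero_of_deriv_eq_zero ht hderiv]
  · have hone : 1 ≤ h t ^ (θ - 1) * (K * r t) := calc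
      1 = h t ^ (θ - 1) * h t ^ (1 - θ) := by rw [← Real.rpow_add hpos]; simp
      _ ≤ h t ^ (θ - 1) * (K * r t) := by gcongr
    calc r t = r t * 1 := (mul_one _).symm
      _ ≤ r t * (h t ^ (θ - 1) * (K * r t)) := by gcongr; exact hd.rate_nonneg ht
      _ = K / e * h t ^ (θ - 1) * (e * r t ^ 2) := by field_simp
      _ ≤ K / e * h t ^ (θ - 1) * (-deriv h t) := by gcongr; linarith [hd.deriv_le t ht]
      _ = -(K / (θ * e) * (deriv h t * θ * h t ^ (θ - 1))) := by field_simp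

variable {a : E} {θ K σ : ℝ}

theorem norm_sub_le_mul_rpow_sub (hd : DissipatesEnergy u u' h r e) (h0 : Tendsto h atTop (𝓝 0))
    (hθ : 0 < θ) (hK : 0 < K) {s t : ℝ} (hs : 0 ≤ s) (hst : s ≤ t)
    (hloj : ∀ x ≥ s, ‖u x - a‖ < σ → h x ^ (1 - θ) ≤ K * r x)
    (hstart : ‖u s - a‖ + K / (θ * e) * h s ^ θ < σ) :
    ‖u t - u s‖ ≤ K / (θ * e) * h s ^ θ - K / (θ * e) * h t ^ θ := by
  have he := hd.pos
  have hnonneg : ∀ x ≥ s, 0 ≤ x := fun x hx => hs.trans hx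
  refine norm_sub_le_sub_of_norm_deriv_le_neg_deriv (G := fun x => K / (θ * e) * h x ^ θ)
    (G' := fun x => K / (θ * e) * (deriv h x * θ * h x ^ (θ - 1)))
    (fun x hx => hd.hasDerivAt x (hnonneg x hx)) (fun x hx => ?_)
    (fun x hx => (hd.hasDerivWithinAt_energy_rpow h0 hθ.ne' (hnonneg x hx)).const_mul _)
    (fun x hx => ?_) (fun x hx hball => ?_) hstart hst
  · exact (((hd.differentiableAt x (hnonneg x hx)).continuousAt.rpow_const
      (Or.inr hθ.le)).const_mul _).continuousWithinAt
  · have := hd.energy_nonneg h0 (hnonneg x hx)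
    positivity
  · exact (hd.norm_deriv_le x (hnonneg x hx)).trans
      (hd.rate_le_neg_deriv_energy_rpow h0 hθ hK (hnonneg x hx) (hloj x hx hball))

theorem eventually_forall_norm_sub_le (hd : DissipatesEnergy u u' h r e)
    (h0 : Tendsto h atTop (𝓝 0)) (hθ : 0 < θ) (hK : 0 < K)
    (hloj : ∀ᶠ t in atTop, ‖u t - a‖ < σ → h t ^ (1 - θ) ≤ K * r t) :
    ∀ᶠ s in atTop, ‖u s - a‖ + K / (θ * e) * h s ^ θ < σ →
      ∀ t ≥ s, ‖u t - u s‖ ≤ K / (θ * e) * h s ^ θ := by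
  have he := hd.pos
  filter_upwards [eventually_forall_ge_atTop.2 hloj, eventually_ge_atTop 0]
    with s hs hs0 hstart t ht
  have hfinal : 0 ≤ K / (θ * e) * h t ^ θ := by
    have := hd.energy_nonneg h0 (hs0.trans ht)
    positivity
  linarith [hd.norm_sub_le_mul_rpow_sub h0 hθ hK hs0 ht hs hstart]

theorem tendsto_of_mapClusterPt (hd : DissipatesEnergy u u' h r e) (h0 : Tendsto h atTop (𝓝 0))
    (hθ : 0 < θ) (hK : 0 < K) (hσ : 0 < σ)
    (hloj : ∀ᶠ t in atTop, ‖u t - a‖ < σ → h t ^ (1 - θ) ≤ K * r t)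
    (ha : MapClusterPt a atTop u) : Tendsto u atTop (𝓝 a) := by
  rw [Metric.tendsto_atTop]
  intro η hη
  have hη' : 0 < min η σ / 2 := half_pos (lt_min hη hσ)
  have hnear : ∃ᶠ s in atTop, ‖u s - a‖ < min η σ / 2 := by
    simpa only [Metric.mem_ball, dist_eq_norm] using ha.frequently (Metric.ball_mem_nhds a hη')
  obtain ⟨s, hs_near, hs_trap, hs_small⟩ :=
    (hnear.and_eventually ((hd.eventually_forall_norm_sub_le h0 hθ hK hloj).and
      ((tendsto_const_mul_rpow_zero h0 hθ (K / (θ * e))).eventually_lt_const hη'))).exists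
  refine ⟨s, fun t ht => ?_⟩
  have hlength := hs_trap (by linarith [min_le_right η σ]) t ht
  rw [dist_eq_norm]
  linarith [min_le_left η σ, norm_sub_le_norm_sub_add_norm_sub (u t) (u s) a]

theorem isBigO_energy_rpow (hd : DissipatesEnergy u u' h r e) (h0 : Tendsto h atTop (𝓝 0))
    (hθ : 0 < θ) (hK : 0 < K) (hσ : 0 < σ)
    (hloj : ∀ᶠ t in atTop, ‖u t - a‖ < σ → h t ^ (1 - θ) ≤ K * r t)
    (ha : Tendsto u atTop (𝓝 a)) : (fun t => u t - a) =O[atTop] fun t => h t ^ θ := by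
  have hstart : ∀ᶠ s in atTop, ‖u s - a‖ + K / (θ * e) * h s ^ θ < σ :=
    ((tendsto_iff_norm_sub_tendsto_zero.1 ha).add
      (tendsto_const_mul_rpow_zero h0 hθ _)).eventually_lt_const (by simpa using hσ)
  refine IsBigO.of_bound (K / (θ * e)) ?_
  filter_upwards [hstart, hd.eventually_forall_norm_sub_le h0 hθ hK hloj, eventually_ge_atTop 0]
    with s hs htrap hs0
  rw [Real.norm_of_nonneg (Real.rpow_nonneg (hd.energy_nonneg h0 hs0) θ), norm_sub_rev]
  exact le_of_tendsto (ha.sub_const _).norm ((eventually_ge_atTop s).mono (htrap hs))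

theorem eventually_deriv_energy_le (hd : DissipatesEnergy u u' h r e) (h0 : Tendsto h atTop (𝓝 0))
    (hK : 0 < K) (hσ : 0 < σ)
    (hloj : ∀ᶠ t in atTop, ‖u t - a‖ < σ → h t ^ (1 - θ) ≤ K * r t)
    (ha : Tendsto u atTop (𝓝 a)) :
    ∀ᶠ t in atTop, deriv h t ≤ -(e / K ^ 2) * h t ^ (2 * (1 - θ)) := by
  filter_upwards [hloj, (tendsto_iff_norm_sub_tendsto_zero.1 ha).eventually_lt_const hσ,
    eventually_ge_atTop 0] with t hlojt hball ht
  have hnonneg := hd.energy_nonneg h0 ht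
  have he := hd.pos
  have hsq : h t ^ (2 * (1 - θ)) ≤ K ^ 2 * r t ^ 2 := calc
    h t ^ (2 * (1 - θ)) = (h t ^ (1 - θ)) ^ 2 := by
      rw [mul_comm, Real.rpow_mul hnonneg, Real.rpow_two]
    _ ≤ (K * r t) ^ 2 := by gcongr; exact hlojt hball
    _ = K ^ 2 * r t ^ 2 := mul_pow _ _ _
  calc deriv h t ≤ -e * r t ^ 2 := hd.deriv_le t ht
    _ = -(e / K ^ 2 * (K ^ 2 * r t ^ 2)) := by field_simp
    _ ≤ -(e / K ^ 2 * h t ^ (2 * (1 - θ))) := by gcongr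
    _ = -(e / K ^ 2) * h t ^ (2 * (1 - θ)) := (neg_mul _ _).symm

theorem isBigO_rpow (hd : DissipatesEnergy u u' h r e) (h0 : Tendsto h atTop (𝓝 0))
    (hθ : 0 < θ) (hθ' : θ < 1 / 2) (hK : 0 < K) (hσ : 0 < σ)
    (hloj : ∀ᶠ t in atTop, ‖u t - a‖ < σ → h t ^ (1 - θ) ≤ K * r t)
    (ha : Tendsto u atTop (𝓝 a)) :
    (fun t => u t - a) =O[atTop] fun t => t ^ (-(θ / (1 - 2 * θ))) := by
  have hq : 0 < 1 - 2 * θ := by linarith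
  have hexp : 2 * (1 - θ) = 1 + (1 - 2 * θ) := by ring
  have henergy : h =O[atTop] fun t => t ^ (-(1 / (1 - 2 * θ))) :=
    isBigO_rpow_of_deriv_le_neg_mul_rpow hq (div_pos hd.pos (pow_pos hK 2))
      ((eventually_ge_atTop 0).mono hd.differentiableAt)
      ((eventually_ge_atTop 0).mono fun _ => hd.energy_nonneg h0)
      (hexp ▸ hd.eventually_deriv_energy_le h0 hK hσ hloj ha)
  have hpow := henergy.rpow hθ.le
    ((eventually_ge_atTop 0).mono fun t ht => Real.rpow_nonneg ht _)
  refine (hd.isBigO_energy_rpow h0 hθ hK hσ hloj ha).trans (hpow.congr' .rfl ?_)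
  filter_upwards [eventually_ge_atTop 0] with t ht
  rw [← Real.rpow_mul ht]
  ring_nf

theorem exists_isBigO_exp (hd : DissipatesEnergy u u' h r e) (h0 : Tendsto h atTop (𝓝 0))
    (hK : 0 < K) (hσ : 0 < σ)
    (hloj : ∀ᶠ t in atTop, ‖u t - a‖ < σ → h t ^ (1 - 1 / 2 : ℝ) ≤ K * r t)
    (ha : Tendsto u atTop (𝓝 a)) :
    ∃ δ > 0, (fun t => u t - a) =O[atTop] fun t => Real.exp (-δ * t) := by
  have hdecay := hd.eventually_deriv_energy_le h0 hK hσ hloj ha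
  norm_num only [Real.rpow_one] at hdecay
  have hpow := (isBigO_exp_of_deriv_le_neg_mul ((eventually_ge_atTop 0).mono hd.differentiableAt)
    ((eventually_ge_atTop 0).mono fun _ => hd.energy_nonneg h0) hdecay).rpow one_half_pos.le
    (.of_forall fun t => (Real.exp_pos _).le)
  refine ⟨e / K ^ 2 / 2, half_pos (div_pos hd.pos (pow_pos hK 2)),
    (hd.isBigO_energy_rpow h0 one_half_pos hK hσ hloj ha).trans (hpow.congr_right fun t => ?_)⟩
  rw [← Real.exp_mul]
  ring_nf

theorem exists_norm_sub_le_rpow (hd : DissipatesEnergy u u' h r e) (h0 : Tendsto h atTop (𝓝 0))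
    (hθ : 0 < θ) (hθ' : θ < 1 / 2) (hK : 0 < K) (hσ : 0 < σ)
    (hloj : ∀ᶠ t in atTop, ‖u t - a‖ < σ → h t ^ (1 - θ) ≤ K * r t)
    (ha : Tendsto u atTop (𝓝 a)) :
    ∃ C > 0, ∀ t ≥ 1, ‖u t - a‖ ≤ C * t ^ (-(θ / (1 - 2 * θ))) :=
  exists_pos_forall_norm_le_of_isBigO_atTop
    ((hd.continuousOn_sub_const a).mono (Ici_subset_Ici.2 zero_le_one))
    (fun t ht => (Real.continuousAt_rpow_const t _
      (Or.inl (zero_lt_one.trans_le ht).ne')).continuousWithinAt)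
    (fun _ ht => Real.rpow_pos_of_pos (zero_lt_one.trans_le ht) _)
    (hd.isBigO_rpow h0 hθ hθ' hK hσ hloj ha)

theorem exists_norm_sub_le_exp (hd : DissipatesEnergy u u' h r e) (h0 : Tendsto h atTop (𝓝 0))
    (hK : 0 < K) (hσ : 0 < σ)
    (hloj : ∀ᶠ t in atTop, ‖u t - a‖ < σ → h t ^ (1 - 1 / 2 : ℝ) ≤ K * r t)
    (ha : Tendsto u atTop (𝓝 a)) :
    ∃ δ > 0, ∃ C > 0, ∀ t ≥ 0, ‖u t - a‖ ≤ C * Real.exp (-δ * t) := by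
  obtain ⟨δ, hδ, hO⟩ := hd.exists_isBigO_exp h0 hK hσ hloj ha
  exact ⟨δ, hδ, exists_pos_forall_norm_le_of_isBigO_atTop (hd.continuousOn_sub_const a)
    (by fun_prop) (fun _ _ => Real.exp_pos _) hO⟩

end DissipatesEnergy

end DissipatesEnergy

section DampedSystem

variable {E : Type*} [NormedAddCommGroup E] [InnerProductSpace ℝ E] [CompleteSpace E]

theorem contDiff_gradient {Φ : E → ℝ} {m n : WithTop ℕ∞} (hΦ : ContDiff ℝ n Φ) (hmn : m + 1 ≤ n) :
    ContDiff ℝ m (∇ Φ) :=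
  (InnerProductSpace.toDual ℝ E).symm.contDiff.comp (hΦ.fderiv_right hmn)

/-- The Lyapunov function of `u'' + u' + ∇ Φ u = 0` in the phase space variables `x = u`, `p = u'`:
the mechanical energy plus a cross term. The mechanical energy alone only dissipates `‖p‖ ^ 2`;
the cross term adds dissipation of `‖∇ Φ x‖ ^ 2`. -/
noncomputable def modifiedEnergy (Φ : E → ℝ) (ε : ℝ) (x p : E) : ℝ :=
  ‖p‖ ^ 2 / 2 + Φ x + ε * ⟪∇ Φ x, p⟫

/-- The distance of the phase space point `(x, p)` from equilibrium, measured by `‖p‖` and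
`‖∇ Φ x‖`. -/
noncomputable def equilibriumDefect (Φ : E → ℝ) (x p : E) : ℝ :=
  √(‖p‖ ^ 2 + ‖∇ Φ x‖ ^ 2)

/-- The curve `u`, with velocity `v`, solves `u'' + u' + ∇ Φ u = 0` on `[0, ∞)`, written as a first
order system. -/
structure IsDampedSolution (Φ : E → ℝ) (u v : ℝ → E) : Prop where
  hasDerivAt : ∀ t ≥ 0, HasDerivAt u (v t) t
  hasDerivAt_velocity : ∀ t ≥ 0, HasDerivAt v (-v t - ∇ Φ (u t)) t

section PhaseSpace

variable {Φ : E → ℝ} {ε : ℝ} {x p : E}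

theorem equilibriumDefect_sq : equilibriumDefect Φ x p ^ 2 = ‖p‖ ^ 2 + ‖∇ Φ x‖ ^ 2 :=
  Real.sq_sqrt (by positivity)

theorem norm_le_equilibriumDefect : ‖p‖ ≤ equilibriumDefect Φ x p :=
  Real.le_sqrt_of_sq_le (by linarith [sq_nonneg ‖∇ Φ x‖])

theorem norm_gradient_le_equilibriumDefect : ‖∇ Φ x‖ ≤ equilibriumDefect Φ x p :=
  Real.le_sqrt_of_sq_le (by linarith [sq_nonneg ‖p‖])

theorem sub_le_modifiedEnergy : Φ x - ε ^ 2 / 2 * ‖∇ Φ x‖ ^ 2 ≤ modifiedEnergy Φ ε x p := by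
  have hsq : 0 ≤ ‖p + ε • ∇ Φ x‖ ^ 2 := sq_nonneg _
  rw [norm_add_sq_real, norm_smul, mul_pow, real_inner_smul_right, real_inner_comm,
    Real.norm_eq_abs, sq_abs] at hsq
  rw [modifiedEnergy]
  linarith

theorem abs_modifiedEnergy_sub_le (hε : 0 ≤ ε) (hε' : ε ≤ 1) :
    |modifiedEnergy Φ ε x p - Φ x| ≤ equilibriumDefect Φ x p ^ 2 := by
  have hinner : |⟪∇ Φ x, p⟫| ≤ (‖p‖ ^ 2 + ‖∇ Φ x‖ ^ 2) / 2 := by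
    linarith [abs_real_inner_le_norm (∇ Φ x) p, two_mul_le_add_sq ‖p‖ ‖∇ Φ x‖]
  calc |modifiedEnergy Φ ε x p - Φ x| = |‖p‖ ^ 2 / 2 + ε * ⟪∇ Φ x, p⟫| := by
        rw [modifiedEnergy]; ring_nf
    _ ≤ ‖p‖ ^ 2 / 2 + ε * |⟪∇ Φ x, p⟫| := by
        refine (abs_add_le _ _).trans_eq ?_
        rw [abs_mul, abs_of_nonneg hε, abs_of_nonneg (by positivity : 0 ≤ ‖p‖ ^ 2 / 2)]
    _ ≤ ‖p‖ ^ 2 / 2 + 1 * ((‖p‖ ^ 2 + ‖∇ Φ x‖ ^ 2) / 2) := by gcongr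
    _ ≤ equilibriumDefect Φ x p ^ 2 := by
        rw [equilibriumDefect_sq]
        linarith [sq_nonneg ‖∇ Φ x‖]

theorem modifiedEnergy_sub_rpow_le {c φ θ : ℝ} (hε : 0 ≤ ε) (hε' : ε ≤ 1) (hc : 0 < c)
    (hθ : 0 ≤ θ) (hθ' : θ ≤ 1 / 2) (hloj : c * |Φ x - φ| ^ (1 - θ) ≤ ‖∇ Φ x‖)
    (hdefect : equilibriumDefect Φ x p ≤ 1) (hnonneg : 0 ≤ modifiedEnergy Φ ε x p - φ) :
    (modifiedEnergy Φ ε x p - φ) ^ (1 - θ) ≤ (1 / c + 1) * equilibriumDefect Φ x p := by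
  set r := equilibriumDefect Φ x p
  have hr : 0 ≤ r := Real.sqrt_nonneg _
  have henergy : modifiedEnergy Φ ε x p - φ ≤ |Φ x - φ| + r ^ 2 := by
    linarith [le_abs_self (modifiedEnergy Φ ε x p - Φ x), le_abs_self (Φ x - φ),
      abs_modifiedEnergy_sub_le (Φ := Φ) (x := x) (p := p) hε hε']
  have hpotential : |Φ x - φ| ^ (1 - θ) ≤ 1 / c * r := by
    rw [one_div_mul_eq_div, le_div_iff₀' hc]
    exact hloj.trans norm_gradient_le_equilibriumDefect
  have hdissipation : (r ^ 2) ^ (1 - θ) ≤ r := by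
    rw [← Real.rpow_two, ← Real.rpow_mul hr]
    exact (Real.rpow_le_rpow_of_exponent_ge_of_imp hr hdefect
      (by linarith : 1 ≤ 2 * (1 - θ)) fun _ _ => by linarith).trans_eq (Real.rpow_one r)
  calc (modifiedEnergy Φ ε x p - φ) ^ (1 - θ) ≤ (|Φ x - φ| + r ^ 2) ^ (1 - θ) :=
        Real.rpow_le_rpow hnonneg henergy (by linarith)
    _ ≤ |Φ x - φ| ^ (1 - θ) + (r ^ 2) ^ (1 - θ) :=
        Real.rpow_add_le_add_rpow (abs_nonneg _) (sq_nonneg _) (by linarith) (by linarith)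
    _ ≤ 1 / c * r + r := add_le_add hpotential hdissipation
    _ = (1 / c + 1) * r := by ring

theorem eventually_modifiedEnergy_sub_rpow_le {ι : Type*} {F : Filter ι} {u v : ι → E} {a : E}
    {c φ σ θ : ℝ} (hε : 0 ≤ ε) (hε' : ε ≤ 1) (hc : 0 < c) (hθ : 0 ≤ θ) (hθ' : θ ≤ 1 / 2)
    (hloj : ∀ y, ‖y - a‖ < σ → c * |Φ y - φ| ^ (1 - θ) ≤ ‖∇ Φ y‖)
    (hdefect : Tendsto (fun t => equilibriumDefect Φ (u t) (v t)) F (𝓝 0))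
    (hnonneg : ∀ᶠ t in F, 0 ≤ modifiedEnergy Φ ε (u t) (v t) - φ) :
    ∀ᶠ t in F, ‖u t - a‖ < σ → (modifiedEnergy Φ ε (u t) (v t) - φ) ^ (1 - θ) ≤
      (1 / c + 1) * equilibriumDefect Φ (u t) (v t) := by
  filter_upwards [hdefect.eventually_le_const one_pos, hnonneg] with t hle ht hball
  exact modifiedEnergy_sub_rpow_le hε hε' hc hθ hθ' (hloj _ hball) hle ht

end PhaseSpace

namespace IsDampedSolution

variable {Φ : E → ℝ} {u v : ℝ → E} {ε L : ℝ} {K : Set E}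

theorem hasDerivAt_gradient (hu : IsDampedSolution Φ u v) (hΦ : ContDiff ℝ 2 Φ) {t : ℝ}
    (ht : 0 ≤ t) : HasDerivAt (fun s => ∇ Φ (u s)) (fderiv ℝ (∇ Φ) (u t) (v t)) t :=
  (((contDiff_gradient hΦ (by norm_num)).differentiable one_ne_zero) (u t)).hasFDerivAt
    |>.comp_hasDerivAt t (hu.hasDerivAt t ht)

theorem hasDerivAt_modifiedEnergy (hu : IsDampedSolution Φ u v) (hΦ : ContDiff ℝ 2 Φ) {t : ℝ}
    (ht : 0 ≤ t) :
    HasDerivAt (fun s => modifiedEnergy Φ ε (u s) (v s))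
      (-‖v t‖ ^ 2 + ε * (⟪fderiv ℝ (∇ Φ) (u t) (v t), v t⟫ - ⟪∇ Φ (u t), v t⟫
        - ‖∇ Φ (u t)‖ ^ 2)) t := by
  have hpotential : HasDerivAt (fun s => Φ (u s)) ⟪∇ Φ (u t), v t⟫ t :=
    ((hΦ.differentiable two_ne_zero) (u t)).hasGradientAt.hasFDerivAt.comp_hasDerivAt t
      (hu.hasDerivAt t ht)
  refine (((hu.hasDerivAt_velocity t ht).norm_sq.div_const 2).add hpotential).add
    (((hu.hasDerivAt_gradient hΦ ht).inner ℝ (hu.hasDerivAt_velocity t ht)).const_mul ε)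
    |>.congr_deriv ?_
  simp only [inner_sub_right, inner_neg_right, real_inner_self_eq_norm_sq,
    real_inner_comm (v t) (∇ Φ (u t))]
  ring

theorem hasDerivAt_equilibriumDefect_sq (hu : IsDampedSolution Φ u v) (hΦ : ContDiff ℝ 2 Φ) {t : ℝ}
    (ht : 0 ≤ t) :
    HasDerivAt (fun s => equilibriumDefect Φ (u s) (v s) ^ 2)
      (2 * (⟪fderiv ℝ (∇ Φ) (u t) (v t), ∇ Φ (u t)⟫ - ⟪∇ Φ (u t), v t⟫ - ‖v t‖ ^ 2)) t := by
  simp only [equilibriumDefect_sq]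
  refine ((hu.hasDerivAt_velocity t ht).norm_sq.add (hu.hasDerivAt_gradient hΦ ht).norm_sq)
    |>.congr_deriv ?_
  simp only [inner_sub_right, inner_neg_right, real_inner_self_eq_norm_sq,
    real_inner_comm (v t) (∇ Φ (u t)), real_inner_comm (∇ Φ (u t)) (fderiv ℝ (∇ Φ) (u t) (v t))]
  ring

theorem dissipatesEnergy (hu : IsDampedSolution Φ u v) (hΦ : ContDiff ℝ 2 Φ)
    (hL : ∀ t ≥ 0, ‖fderiv ℝ (∇ Φ) (u t)‖ ≤ L) (hε : 0 < ε) (hεL : ε * (1 + L) ≤ 1) :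
    DissipatesEnergy u v (fun t => modifiedEnergy Φ ε (u t) (v t))
      (fun t => equilibriumDefect Φ (u t) (v t)) (ε / 2) where
  pos := half_pos hε
  hasDerivAt := hu.hasDerivAt
  differentiableAt _ ht := (hu.hasDerivAt_modifiedEnergy hΦ ht).differentiableAt
  norm_deriv_le _ _ := norm_le_equilibriumDefect
  deriv_le t ht := by
    rw [(hu.hasDerivAt_modifiedEnergy hΦ ht).deriv, equilibriumDefect_sq]
    set p := v t
    set g := ∇ Φ (u t)
    have hhessian : ⟪fderiv ℝ (∇ Φ) (u t) p, p⟫ ≤ L * ‖p‖ * ‖p‖ :=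
      (real_inner_le_norm _ _).trans <| by
        gcongr
        exact ContinuousLinearMap.le_of_opNorm_le _ (hL t ht) p
    have hcross : -⟪g, p⟫ ≤ (‖p‖ ^ 2 + ‖g‖ ^ 2) / 2 := by
      linarith [neg_le_of_abs_le (abs_real_inner_le_norm g p), two_mul_le_add_sq ‖p‖ ‖g‖]
    calc -‖p‖ ^ 2 + ε * (⟪fderiv ℝ (∇ Φ) (u t) p, p⟫ - ⟪g, p⟫ - ‖g‖ ^ 2)
        ≤ -‖p‖ ^ 2 + ε * (L * ‖p‖ * ‖p‖ + (‖p‖ ^ 2 + ‖g‖ ^ 2) / 2 - ‖g‖ ^ 2) := by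
          gcongr; linarith
      _ = -(1 - ε * (1 + L)) * ‖p‖ ^ 2 - ε / 2 * (‖p‖ ^ 2 + ‖g‖ ^ 2) := by ring
      _ ≤ -(ε / 2) * (‖p‖ ^ 2 + ‖g‖ ^ 2) := by nlinarith [sq_nonneg ‖p‖]

theorem deriv_equilibriumDefect_sq_le (hu : IsDampedSolution Φ u v) (hΦ : ContDiff ℝ 2 Φ) {t G : ℝ}
    (ht : 0 ≤ t) (hL : ‖fderiv ℝ (∇ Φ) (u t)‖ ≤ L) (hG : ‖∇ Φ (u t)‖ ≤ G) :
    deriv (fun s => equilibriumDefect Φ (u s) (v s) ^ 2) t ≤ ((1 + L) * G) ^ 2 / 2 := by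
  rw [(hu.hasDerivAt_equilibriumDefect_sq hΦ ht).deriv]
  set p := v t
  set g := ∇ Φ (u t)
  have hhessian : ⟪fderiv ℝ (∇ Φ) (u t) p, g⟫ ≤ L * ‖p‖ * ‖g‖ :=
    (real_inner_le_norm _ _).trans (by gcongr; exact ContinuousLinearMap.le_of_opNorm_le _ hL p)
  have hcross : -⟪g, p⟫ ≤ ‖g‖ * ‖p‖ := (neg_le_abs _).trans (abs_real_inner_le_norm g p)
  have hL0 : 0 ≤ L := (norm_nonneg _).trans hL
  calc 2 * (⟪fderiv ℝ (∇ Φ) (u t) p, g⟫ - ⟪g, p⟫ - ‖p‖ ^ 2)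
      ≤ 2 * ((1 + L) * ‖g‖ * ‖p‖ - ‖p‖ ^ 2) := by linarith
    _ ≤ ((1 + L) * ‖g‖) ^ 2 / 2 := by nlinarith [sq_nonneg ((1 + L) * ‖g‖ - 2 * ‖p‖)]
    _ ≤ ((1 + L) * G) ^ 2 / 2 := by gcongr

theorem exists_tendsto_modifiedEnergy (hu : IsDampedSolution Φ u v) (hΦ : ContDiff ℝ 2 Φ)
    (hK : IsCompact K) (huK : ∀ t ≥ 0, u t ∈ K) :
    ∃ ε ∈ Ioc 0 1, ∃ l,
      DissipatesEnergy u v (fun t => modifiedEnergy Φ ε (u t) (v t))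
        (fun t => equilibriumDefect Φ (u t) (v t)) (ε / 2) ∧
      Tendsto (fun t => modifiedEnergy Φ ε (u t) (v t)) atTop (𝓝 l) ∧
      Tendsto (fun t => equilibriumDefect Φ (u t) (v t)) atTop (𝓝 0) := by
  have hgrad : ContDiff ℝ 1 (∇ Φ) := contDiff_gradient hΦ (by norm_num)
  obtain ⟨L, hL⟩ :=
    hK.exists_bound_of_continuousOn (hgrad.continuous_fderiv one_ne_zero).continuousOn
  obtain ⟨G, hG⟩ := hK.exists_bound_of_continuousOn hgrad.continuous.continuousOn
  have hL0 : 0 ≤ L := (norm_nonneg _).trans (hL _ (huK 0 le_rfl))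
  have hd := hu.dissipatesEnergy hΦ (fun t ht => hL _ (huK t ht)) (ε := (1 + L)⁻¹) (by positivity)
    (inv_mul_cancel₀ (by positivity)).le
  have hlower : Continuous fun x => Φ x - (1 + L)⁻¹ ^ 2 / 2 * ‖∇ Φ x‖ ^ 2 :=
    hΦ.continuous.sub ((hgrad.continuous.norm.pow 2).const_mul _)
  obtain ⟨m, hm⟩ := hK.bddBelow_image hlower.continuousOn
  obtain ⟨l, hl⟩ := exists_tendsto_atTop_of_antitoneOn hd.antitoneOn
    ⟨m, forall_mem_image.2 fun t ht =>
      (hm (mem_image_of_mem _ (huK t ht))).trans sub_le_modifiedEnergy⟩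
  refine ⟨(1 + L)⁻¹, ⟨by positivity, inv_le_one_of_one_le₀ (by linarith)⟩, l, hd, hl, ?_⟩
  exact hd.tendsto_rate
    (fun t ht => (hu.hasDerivAt_equilibriumDefect_sq hΦ ht).differentiableAt)
    (fun t ht => hu.deriv_equilibriumDefect_sq_le hΦ ht (hL _ (huK t ht)) (hG _ (huK t ht))) hl

theorem exists_mapClusterPt_energy (hu : IsDampedSolution Φ u v) (hΦ : ContDiff ℝ 2 Φ)
    (hK : IsCompact K) (huK : ∀ t ≥ 0, u t ∈ K) :
    ∃ ε ∈ Ioc 0 1, ∃ a ∈ K, MapClusterPt a atTop u ∧ ∇ Φ a = 0 ∧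
      DissipatesEnergy u v (fun t => modifiedEnergy Φ ε (u t) (v t) - Φ a)
        (fun t => equilibriumDefect Φ (u t) (v t)) (ε / 2) ∧
      Tendsto (fun t => modifiedEnergy Φ ε (u t) (v t) - Φ a) atTop (𝓝 0) ∧
      Tendsto (fun t => equilibriumDefect Φ (u t) (v t)) atTop (𝓝 0) := by
  obtain ⟨ε, hε, l, hd, hl, hr⟩ := hu.exists_tendsto_modifiedEnergy hΦ hK huK
  have hgradient : Tendsto (fun t => ∇ Φ (u t)) atTop (𝓝 0) :=
    squeeze_zero_norm (fun _ => norm_gradient_le_equilibriumDefect) hr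
  have hpotential : Tendsto (fun t => Φ (u t)) atTop (𝓝 l) := by
    have hdiff : Tendsto (fun t => modifiedEnergy Φ ε (u t) (v t) - Φ (u t)) atTop (𝓝 0) :=
      squeeze_zero_norm (fun _ => abs_modifiedEnergy_sub_le hε.1.le hε.2) (by simpa using hr.pow 2)
    simpa using hl.sub hdiff
  obtain ⟨a, haK, ha⟩ := hK.exists_mapClusterPt_of_frequently
    ((eventually_ge_atTop 0).mono huK).frequently
  obtain rfl : Φ a = l := eq_of_mapClusterPt_of_tendsto ha hΦ.continuous.continuousAt hpotential
  refine ⟨ε, hε, a, haK, ha, ?_, hd.sub_const _, by simpa using hl.sub_const (Φ a), hr⟩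
  exact eq_of_mapClusterPt_of_tendsto ha
    (contDiff_gradient hΦ (m := 1) (by norm_num)).continuous.continuousAt hgradient

end IsDampedSolution

theorem stmt_14_general (Φ : E → ℝ) (hΦ : ContDiff ℝ 2 Φ) {K : Set E} (hK : IsCompact K)
    (hLoj : ∀ a ∈ K, ∇ Φ a = 0 → ∃ c > 0, ∃ σ > 0, ∃ θ ∈ Ioc (0 : ℝ) (1 / 2),
      ∀ v, ‖v - a‖ < σ → c * |Φ v - Φ a| ^ (1 - θ) ≤ ‖∇ Φ v‖)
    (u u' u'' : ℝ → E) (hu1 : ∀ t ≥ 0, HasDerivAt u (u' t) t)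
    (hu2 : ∀ t ≥ 0, HasDerivAt u' (u'' t) t) (heq : ∀ t ≥ 0, u'' t + u' t + ∇ Φ (u t) = 0)
    (huK : ∀ t ≥ 0, u t ∈ K) :
    ∃ a, ∇ Φ a = 0 ∧ Tendsto (fun t => ‖u' t‖ + ‖u t - a‖) atTop (𝓝 0) ∧
      ∀ θ ∈ Ioc (0 : ℝ) (1 / 2), ∀ c > 0, ∀ σ > 0,
        (∀ v, ‖v - a‖ < σ → c * |Φ v - Φ a| ^ (1 - θ) ≤ ‖∇ Φ v‖) →
        ((θ < 1 / 2 → ∃ C > 0, ∀ t ≥ 1, ‖u t - a‖ ≤ C * t ^ (-(θ / (1 - 2 * θ)))) ∧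
          (θ = 1 / 2 → ∃ δ > 0, ∃ C > 0, ∀ t ≥ 0, ‖u t - a‖ ≤ C * Real.exp (-δ * t))) := by
  have hsol : IsDampedSolution Φ u u' := ⟨hu1, fun t ht => (hu2 t ht).congr_deriv <| by
    rw [← sub_eq_zero, ← heq t ht]; abel⟩
  obtain ⟨ε, hε, a, haK, ha, hcrit, hd, h0, hr⟩ := hsol.exists_mapClusterPt_energy hΦ hK huK
  have henergy {θ c σ : ℝ} (hθ : θ ∈ Ioc (0 : ℝ) (1 / 2)) (hc : 0 < c)
      (hloj : ∀ v, ‖v - a‖ < σ → c * |Φ v - Φ a| ^ (1 - θ) ≤ ‖∇ Φ v‖) :=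
    eventually_modifiedEnergy_sub_rpow_le hε.1.le hε.2 hc hθ.1.le hθ.2 hloj hr
      ((eventually_ge_atTop 0).mono fun _ => hd.energy_nonneg h0)
  have hconv : Tendsto u atTop (𝓝 a) := by
    obtain ⟨c, hc, σ, hσ, θ, hθ, hloj⟩ := hLoj a haK hcrit
    exact hd.tendsto_of_mapClusterPt h0 hθ.1 (by positivity) hσ (henergy hθ hc hloj) ha
  have hvelocity : Tendsto (fun t => ‖u' t‖) atTop (𝓝 0) :=
    squeeze_zero (fun _ => norm_nonneg _) (fun _ => norm_le_equilibriumDefect) hr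
  refine ⟨a, hcrit, by simpa using hvelocity.add (tendsto_iff_norm_sub_tendsto_zero.1 hconv),
    fun θ hθ c hc σ hσ hloj => ⟨fun hlt => ?_, ?_⟩⟩
  · exact hd.exists_norm_sub_le_rpow h0 hθ.1 hlt (by positivity) hσ (henergy hθ hc hloj) hconv
  · rintro rfl
    exact hd.exists_norm_sub_le_exp h0 (by positivity) hσ (henergy hθ hc hloj) hconv

end DampedSystem

/-- Theorem 9.2.3 (Łojasiewicz convergence theorem for the damped second order system):
every bounded solution of `u'' + u' + ∇Φ(u) = 0` converges to a critical point `a`,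
with the corresponding decay rates given by a Łojasiewicz exponent of `Φ` at `a`. -/
theorem stmt_14 {N : ℕ} (Φ : EuclideanSpace ℝ (Fin N) → ℝ) (hΦ : ContDiff ℝ 2 Φ)
    (hLoj : ∀ a : EuclideanSpace ℝ (Fin N), gradient Φ a = 0 →
      ∃ c > 0, ∃ σ > 0, ∃ θ ∈ Set.Ioc (0:ℝ) (1/2),
        ∀ v : EuclideanSpace ℝ (Fin N), ‖v - a‖ < σ →
          c * |Φ v - Φ a| ^ (1 - θ) ≤ ‖gradient Φ v‖)
    (u u' u'' : ℝ → EuclideanSpace ℝ (Fin N))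
    (hu1 : ∀ t ≥ (0:ℝ), HasDerivAt u (u' t) t)
    (hu2 : ∀ t ≥ (0:ℝ), HasDerivAt u' (u'' t) t)
    (heq : ∀ t ≥ (0:ℝ), u'' t + u' t + gradient Φ (u t) = 0)
    (hbdd : ∃ M : ℝ, ∀ t ≥ (0:ℝ), ‖u t‖ ≤ M ∧ ‖u' t‖ ≤ M) :
    ∃ a : EuclideanSpace ℝ (Fin N), gradient Φ a = 0 ∧
      Filter.Tendsto (fun t => ‖u' t‖ + ‖u t - a‖) Filter.atTop (nhds 0) ∧
      ∀ θ ∈ Set.Ioc (0:ℝ) (1/2), ∀ c > (0:ℝ), ∀ σ > (0:ℝ),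
        (∀ v : EuclideanSpace ℝ (Fin N), ‖v - a‖ < σ →
          c * |Φ v - Φ a| ^ (1 - θ) ≤ ‖gradient Φ v‖) →
        ((θ < 1/2 → ∃ C > (0:ℝ), ∀ t ≥ (1:ℝ),
            ‖u t - a‖ ≤ C * t ^ (-(θ / (1 - 2 * θ)))) ∧
         (θ = 1/2 → ∃ δ > (0:ℝ), ∃ C > (0:ℝ), ∀ t ≥ (0:ℝ),
            ‖u t - a‖ ≤ C * Real.exp (-δ * t))) := by
  obtain ⟨M, hM⟩ := hbdd
  exact stmt_14_general Φ hΦ (isCompact_closedBall 0 M) (fun a _ => hLoj a) u u' u'' hu1 hu2 heq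
    fun t ht => mem_closedBall_zero_iff.2 (hM t ht).1
end
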